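/- arXiv:1711.02916 — 2 statements merged into one kernel-verified Lean document; each statement's English description precedes it below -/
import Mathlib

section
/- There exist μ > 0 and n₀ ∈ ℕ such that for every n ≥ n₀ the following holds: if G is a Dirac bipartite graph on 2n vertices, then for every μn-bounded edge colouring χ of G there exists a perfect matching of G that is rainbow with respect to χ. -/
/-!
If every two vertex sets containing at least half of each part span a positive proportion of all
pairs, then every edge of every perfect matching lies in quadratically many switchings along
alternating six-cycles, and almost all of these create no new repetition of a colour. Hence in a
uniformly random perfect matching two given edges of the same colour occur together with probability
`O(1 / n²)`, even conditionally on avoiding pairs that do not touch them, and the lopsided local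
lemma yields a rainbow perfect matching.

Otherwise there are `X` and `Y`, each about half of its part, such that nearly all pairs between `X`
and the complement of `Y`, and between the complement of `X` and `Y`, are edges, while
`#X + #Y = n + d` with `d ≥ 0` small, so that a perfect matching needs `d` edges between `X` and
`Y`. Moving a vertex with many neighbours on the wrong side decreases `d`. When no such vertex is
left, reserve a small set `T` of colours in which all degrees and edge counts are proportional
(Beck–Fiala rounding), and choose greedily a rainbow matching of `d` edges between `X` and `Y` with
colours in `T`. What remains, without the colours in `T`, is a pair of balanced nearly complete
bipartite graphs, to which the random argument applies again.
-/

namespace RainbowMatching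

open Finset MeasureTheory

section LocalLemma

variable {Ω ι : Type*} [MeasurableSpace Ω] {μ : Measure Ω} [IsFiniteMeasure μ]

lemma measureReal_biInter_compl_le_add_sum [DecidableEq ι] (A : ι → Set Ω) (S T : Finset ι) :
    μ.real (⋂ j ∈ S \ T, (A j)ᶜ) ≤ μ.real (⋂ j ∈ S, (A j)ᶜ) +
      ∑ j ∈ S ∩ T, μ.real (A j ∩ ⋂ j ∈ S \ T, (A j)ᶜ) := by
  have hcover : ⋂ j ∈ S \ T, (A j)ᶜ ⊆
      (⋂ j ∈ S, (A j)ᶜ) ∪ ⋃ j ∈ S ∩ T, (A j ∩ ⋂ j ∈ S \ T, (A j)ᶜ) := by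
    intro x hx
    by_cases h : ∃ j ∈ S ∩ T, x ∈ A j
    · obtain ⟨j, hj, hxj⟩ := h
      exact Or.inr (Set.mem_iUnion₂.2 ⟨j, hj, hxj, hx⟩)
    · refine Or.inl (Set.mem_iInter₂.2 fun j hj hxj => ?_)
      by_cases hjT : j ∈ T
      · exact h ⟨j, mem_inter.2 ⟨hj, hjT⟩, hxj⟩
      · exact Set.mem_iInter₂.1 hx j (mem_sdiff.2 ⟨hj, hjT⟩) hxj
  calc _ ≤ _ := measureReal_mono hcover
    _ ≤ _ := measureReal_union_le _ _
    _ ≤ _ := by gcongr; exact measureReal_biUnion_finset_le _ _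

variable {A : ι → Set Ω} {J : Finset ι} {Γ : ι → Finset ι} {p : ℝ}

-- Conditioning on the events outside `Γ i` costs a factor `p` by assumption; the induction
-- hypothesis shows that adding the few events in `Γ i` at most halves the probability.
lemma measureReal_inter_biInter_compl_le (hp : 0 ≤ p) (hΓ : ∀ i ∈ J, 4 * p * #(Γ i) ≤ 1)
    (h : ∀ i ∈ J, ∀ S ⊆ J, Disjoint S (Γ i) →
      μ.real (A i ∩ ⋂ j ∈ S, (A j)ᶜ) ≤ p * μ.real (⋂ j ∈ S, (A j)ᶜ))
    {S : Finset ι} (hS : S ⊆ J) {i : ι} (hi : i ∈ J) :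
    μ.real (A i ∩ ⋂ j ∈ S, (A j)ᶜ) ≤ 2 * p * μ.real (⋂ j ∈ S, (A j)ᶜ) := by
  classical
  induction S using Finset.strongInduction generalizing i with
  | H S ih =>
    have hrest : S \ Γ i ⊆ J := sdiff_subset.trans hS
    have hsum : ∑ j ∈ S ∩ Γ i, μ.real (A j ∩ ⋂ j ∈ S \ Γ i, (A j)ᶜ) ≤
        #(S ∩ Γ i) * (2 * p * μ.real (⋂ j ∈ S \ Γ i, (A j)ᶜ)) := by
      rw [← nsmul_eq_mul]
      refine sum_le_card_nsmul _ _ _ fun j hj => ?_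
      rw [mem_inter] at hj
      exact ih _ (by grind) hrest (hS hj.1)
    have hhalf : μ.real (⋂ j ∈ S \ Γ i, (A j)ᶜ) ≤ 2 * μ.real (⋂ j ∈ S, (A j)ᶜ) := by
      have hfew : 4 * p * #(S ∩ Γ i) ≤ 1 :=
        le_trans (by gcongr; exact inter_subset_right) (hΓ i hi)
      have := measureReal_biInter_compl_le_add_sum (μ := μ) A S (Γ i)
      nlinarith [mul_le_mul_of_nonneg_right hfew
        (measureReal_nonneg (μ := μ) (s := ⋂ j ∈ S \ Γ i, (A j)ᶜ))]
    calc μ.real (A i ∩ ⋂ j ∈ S, (A j)ᶜ)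
        ≤ μ.real (A i ∩ ⋂ j ∈ S \ Γ i, (A j)ᶜ) := measureReal_mono <|
          Set.inter_subset_inter_right _ <| Set.biInter_subset_biInter_left sdiff_subset
      _ ≤ p * μ.real (⋂ j ∈ S \ Γ i, (A j)ᶜ) := h i hi _ hrest sdiff_disjoint
      _ ≤ p * (2 * μ.real (⋂ j ∈ S, (A j)ᶜ)) := by gcongr
      _ = 2 * p * μ.real (⋂ j ∈ S, (A j)ᶜ) := by ring

theorem lopsided_local_lemma [NeZero μ] (hp : 0 ≤ p) (hp' : p ≤ 1 / 4)
    (hΓ : ∀ i ∈ J, 4 * p * #(Γ i) ≤ 1)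
    (h : ∀ i ∈ J, ∀ S ⊆ J, Disjoint S (Γ i) →
      μ.real (A i ∩ ⋂ j ∈ S, (A j)ᶜ) ≤ p * μ.real (⋂ j ∈ S, (A j)ᶜ)) :
    0 < μ.real (⋂ j ∈ J, (A j)ᶜ) := by
  classical
  suffices ∀ S ⊆ J, 0 < μ.real (⋂ j ∈ S, (A j)ᶜ) from this J Subset.rfl
  intro S
  induction S using Finset.induction_on with
  | empty => simp [measureReal_univ_pos]
  | insert i S _ ih =>
    intro hS
    have hSJ : S ⊆ J := (subset_insert _ _).trans hS
    have hbad := measureReal_inter_biInter_compl_le hp hΓ h hSJ (hS (mem_insert_self i S))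
    have hcover : μ.real (⋂ j ∈ S, (A j)ᶜ) ≤
        μ.real (A i ∩ ⋂ j ∈ S, (A j)ᶜ) + μ.real (⋂ j ∈ insert i S, (A j)ᶜ) := by
      rw [set_biInter_insert, Set.inter_comm, Set.inter_comm (A i)ᶜ]
      refine (measureReal_mono ?_).trans (measureReal_union_le _ _)
      rw [Set.inter_union_compl]
    nlinarith [ih hSJ]

theorem exists_forall_notMem_of_lopsided {Ω : Type*} {ι : Type*} [Finite Ω] [Finite ι]
    {U : Set Ω} (hU : U.Nonempty) {A : ι → Set Ω} {J : Set ι} {Γ : ι → Set ι} {p : ℝ}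
    (hp : 0 ≤ p) (hp' : p ≤ 1 / 4) (hΓ : ∀ i ∈ J, 4 * p * (Γ i).ncard ≤ 1)
    (h : ∀ i ∈ J, ∀ S ⊆ J, Disjoint S (Γ i) →
      {x ∈ U | x ∈ A i ∧ ∀ j ∈ S, x ∉ A j}.ncard ≤ p * {x ∈ U | ∀ j ∈ S, x ∉ A j}.ncard) :
    ∃ x ∈ U, ∀ j ∈ J, x ∉ A j := by
  classical
  have := Fintype.ofFinite ι
  let _ : MeasurableSpace Ω := ⊤
  have hreal (s : Set Ω) : (Measure.count.restrict U).real s = (U ∩ s).ncard := by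
    rw [measureReal_restrict_apply MeasurableSpace.measurableSet_top, Set.inter_comm,
      Measure.real, Measure.count_apply MeasurableSpace.measurableSet_top,
      ← (Set.toFinite _).cast_ncard_eq, ENat.toENNReal_coe, ENNReal.toReal_natCast]
  have : NeZero ((Measure.count : Measure Ω).restrict U) :=
    ⟨fun h0 => hU.ne_empty <| Measure.count_eq_zero_iff.1 <| Measure.restrict_eq_zero.1 h0⟩
  have hsets (S : Finset ι) :
      U ∩ ⋂ j ∈ S, (A j)ᶜ = {x ∈ U | ∀ j ∈ (S : Set ι), x ∉ A j} := by
    ext; simp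
  have hpos := lopsided_local_lemma (μ := Measure.count.restrict U) (A := A) (J := J.toFinset)
    (Γ := fun i => (Γ i).toFinset) hp hp' (fun i hi => by
      rw [← Set.ncard_eq_toFinset_card']; exact hΓ i (by simpa using hi)) fun i hi S hS hdisj => by
      rw [hreal, hreal, Set.inter_left_comm, hsets]
      convert h i (by simpa using hi) S (by simpa [Set.subset_def] using hS)
        (by rw [← Set.coe_toFinset (Γ i)]; exact disjoint_coe.2 hdisj) using 3
      ext; grind
  rw [hreal, Nat.cast_pos, Set.ncard_pos] at hpos
  obtain ⟨x, hxU, hx⟩ := hpos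
  exact ⟨x, hxU, by simpa using hx⟩

end LocalLemma

section BeckFiala

variable {ι κ : Type*}

lemma exists_ne_zero_forall_sum_mul_eq_zero {K : Type*} [Field K] (w : ι → κ → K)
    {s : Finset ι} {F : Finset κ} (h : #s < #F) :
    ∃ z : κ → K, z ≠ 0 ∧ (∀ c ∉ F, z c = 0) ∧ ∀ i ∈ s, ∑ c ∈ F, w i c * z c = 0 := by
  classical
  let f : (F → K) →ₗ[K] (s → K) := Matrix.toLin' (Matrix.of fun i c => w i c)
  obtain ⟨v, hv, hv0⟩ := Submodule.exists_mem_ne_zero_of_ne_bot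
    (LinearMap.ker_ne_bot_of_finrank_lt (f := f) (by simpa using h))
  refine ⟨fun c => if hc : c ∈ F then v ⟨c, hc⟩ else 0, fun h0 => hv0 ?_, ?_, fun i hi => ?_⟩
  · ext c
    simpa using congrFun h0 c
  · exact fun c hc => dif_neg hc
  · rw [← sum_coe_sort]
    simpa [f, Matrix.mulVec, dotProduct] using congrFun (LinearMap.mem_ker.1 hv) ⟨i, hi⟩

lemma exists_add_mul_mem_unitInterval [Finite κ] {x z : κ → ℝ} (hx : ∀ c, x c ∈ Set.Icc 0 1)
    (hz : z ≠ 0) :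
    ∃ t : ℝ, (∀ c, x c + t * z c ∈ Set.Icc 0 1) ∧
      ∃ c, z c ≠ 0 ∧ (x c + t * z c = 0 ∨ x c + t * z c = 1) := by
  have := Fintype.ofFinite κ
  let room c := max ((0 - x c) / z c) ((1 - x c) / z c)
  have hne : (univ.filter fun c => z c ≠ 0).Nonempty := by
    simpa [filter_nonempty_iff] using Function.ne_iff.1 hz
  obtain ⟨c₀, hc₀, hmin⟩ := exists_min_image _ room hne
  simp only [mem_filter_univ] at hc₀ hmin
  have hroom : ∀ c, z c ≠ 0 → 0 ≤ room c := by
    intro c hc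
    rcases hc.lt_or_gt with h | h
    · exact le_max_of_le_left (div_nonneg_of_nonpos (by linarith [(hx c).1]) h.le)
    · exact le_max_of_le_right (div_nonneg (by linarith [(hx c).2]) h.le)
  refine ⟨room c₀, fun c => ?_, c₀, hc₀, ?_⟩
  · rcases lt_trichotomy (z c) 0 with h | h | h
    · have ht : room c₀ ≤ (0 - x c) / z c := (hmin c h.ne).trans <|
        max_le le_rfl (div_le_div_of_nonpos_of_le h.le (by linarith))
      rw [le_div_iff_of_neg h] at ht
      exact ⟨by linarith, by nlinarith [(hx c).2, hroom c₀ hc₀]⟩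
    · simpa [h] using hx c
    · have ht : room c₀ ≤ (1 - x c) / z c := (hmin c h.ne').trans <|
        max_le (by gcongr; norm_num) le_rfl
      rw [le_div_iff₀ h] at ht
      exact ⟨by nlinarith [(hx c).1, hroom c₀ hc₀], by linarith⟩
  · rcases max_choice ((0 - x c₀) / z c₀) ((1 - x c₀) / z c₀) with h | h
    · left; simp only [room, h]; field_simp; ring
    · right; simp only [room, h]; field_simp; ring

lemma abs_sum_mul_sub_le_sum_abs [Fintype κ] (w : κ → ℝ) {x y : κ → ℝ} {F : Finset κ}
    (hx : ∀ c, x c ∈ Set.Icc 0 1) (hy : ∀ c, y c ∈ Set.Icc 0 1) (hxy : ∀ c ∉ F, y c = x c) :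
    |∑ c, w c * (y c - x c)| ≤ ∑ c ∈ F, |w c| := by
  rw [← sum_subset (subset_univ F) fun c _ hc => by simp [hxy c hc]]
  refine (abs_sum_le_sum_abs _ _).trans (sum_le_sum fun c _ => ?_)
  rw [abs_mul]
  refine mul_le_of_le_one_right (abs_nonneg _) (abs_le.2 ?_)
  constructor <;> linarith [(hx c).1, (hx c).2, (hy c).1, (hy c).2]

variable [Fintype ι] {w : ι → κ → ℝ} {Δ : ℝ}

open scoped Classical in
lemma card_filter_lt_sum_abs_lt (hΔ : 0 ≤ Δ) (hw : ∀ c, ∑ i, |w i c| ≤ Δ) {F : Finset κ}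
    (hF : F.Nonempty) : #{i | Δ < ∑ c ∈ F, |w i c|} < #F := by
  set s : Finset ι := {i | Δ < ∑ c ∈ F, |w i c|} with hs
  rcases s.eq_empty_or_nonempty with h | h
  · simpa [h] using hF
  refine Nat.cast_lt.1 (lt_of_mul_lt_mul_right (a := Δ) ?_ hΔ)
  calc (#s * Δ : ℝ) = ∑ _i ∈ s, Δ := by simp
    _ < ∑ i ∈ s, ∑ c ∈ F, |w i c| :=
      sum_lt_sum_of_nonempty h fun i hi => by simpa [hs] using hi
    _ ≤ ∑ i, ∑ c ∈ F, |w i c| :=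
      sum_le_univ_sum_of_nonneg fun i => sum_nonneg fun c _ => abs_nonneg _
    _ = ∑ c ∈ F, ∑ i, |w i c| := sum_comm
    _ ≤ ∑ _c ∈ F, Δ := sum_le_sum fun c _ => hw c
    _ = #F * Δ := by simp

-- A row whose weight on the fractional coordinates is at most `Δ` can be ignored from then on.
-- The remaining rows are fewer than the fractional coordinates, so `x` can be moved along a
-- direction preserving them until one more coordinate becomes integral.
theorem beckFiala_rounding [Fintype κ] (hΔ : 0 ≤ Δ) (hw : ∀ c, ∑ i, |w i c| ≤ Δ) {x : κ → ℝ}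
    (hx : ∀ c, x c ∈ Set.Icc 0 1) :
    ∃ y : κ → ℝ, (∀ c, y c = 0 ∨ y c = 1) ∧ (∀ c, x c = 0 ∨ x c = 1 → y c = x c) ∧
      ∀ i, |∑ c, w i c * (y c - x c)| ≤ Δ := by
  classical
  induction hF : ({c | ¬(x c = 0 ∨ x c = 1)} : Finset κ) using Finset.strongInduction
    generalizing x with
  | H F ih =>
    have hmem : ∀ c, c ∉ F ↔ x c = 0 ∨ x c = 1 := fun c => by
      rw [← hF, mem_filter_univ, not_not]
    rcases F.eq_empty_or_nonempty with rfl | hne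
    · exact ⟨x, fun c => (hmem c).1 (notMem_empty c), fun _ _ => rfl, by simpa using fun _ => hΔ⟩
    obtain ⟨z, hz0, hzF, hz⟩ :=
      exists_ne_zero_forall_sum_mul_eq_zero w (card_filter_lt_sum_abs_lt hΔ hw hne)
    obtain ⟨t, ht, c₀, hc₀, hint⟩ := exists_add_mul_mem_unitInterval hx hz0
    have hfix : ∀ c ∉ F, x c + t * z c = x c := fun c hc => by simp [hzF c hc]
    obtain ⟨y, hy01, hyx, hy⟩ := ih {c | ¬(x c + t * z c = 0 ∨ x c + t * z c = 1)} (by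
      refine (ssubset_iff_of_subset fun c hc => ?_).2
        ⟨c₀, not_imp_comm.1 (hzF c₀) hc₀, by rw [mem_filter_univ, not_not]; exact hint⟩
      by_contra hcF
      rw [mem_filter_univ, hfix c hcF] at hc
      exact hc ((hmem c).1 hcF)) ht rfl
    have hyF : ∀ c ∉ F, y c = x c := fun c hc => by
      rw [hyx c (by rwa [hfix c hc, ← hmem]), hfix c hc]
    refine ⟨y, hy01, fun c hc => hyF c ((hmem c).2 hc), fun i => ?_⟩
    by_cases hi : Δ < ∑ c ∈ F, |w i c|
    · have hzi : ∑ c, w i c * z c = 0 := by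
        rw [← sum_subset (subset_univ F) fun c _ hc => by simp [hzF c hc]]
        exact hz i (by simpa using hi)
      have hmove : ∑ c, w i c * (y c - x c) =
          ∑ c, w i c * (y c - (x c + t * z c)) + t * ∑ c, w i c * z c := by
        rw [mul_sum, ← sum_add_distrib]
        exact sum_congr rfl fun c _ => by ring
      simpa [hmove, hzi] using hy i
    · refine (abs_sum_mul_sub_le_sum_abs (w i) hx (fun c => ?_) hyF).trans (not_lt.1 hi)
      rcases hy01 c with h | h <;> simp [h]

theorem exists_abs_sum_sub_mul_sum_le [Fintype κ] (hΔ : 0 ≤ Δ) (hw : ∀ c, ∑ i, |w i c| ≤ Δ)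
    {p : ℝ} (hp : p ∈ Set.Icc 0 1) :
    ∃ T : Finset κ, ∀ i, |∑ c ∈ T, w i c - p * ∑ c, w i c| ≤ Δ := by
  classical
  obtain ⟨y, hy01, -, hy⟩ := beckFiala_rounding hΔ hw (x := fun _ => p) fun _ => hp
  obtain ⟨T, hT⟩ : ∃ T : Finset κ, ∀ c, y c = if c ∈ T then 1 else 0 := by
    refine ⟨({c | y c = 1} : Finset κ), fun c => ?_⟩
    rcases hy01 c with h | h <;> simp [h]
  refine ⟨T, fun i => ?_⟩
  simpa [hT, mul_sub, sum_ite_mem, sum_mul, mul_comm p] using hy i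

lemma sum_ncard_sep_apply_eq {γ : Type*} [Finite γ] (A : Set γ) (χ : γ → κ) (T : Finset κ) :
    ∑ c ∈ T, {x ∈ A | χ x = c}.ncard = {x ∈ A | χ x ∈ T}.ncard := by
  classical
  have := Fintype.ofFinite γ
  simp only [Set.ncard_eq_toFinset_card']
  rw [card_eq_sum_card_fiberwise (f := χ) (t := T) fun x hx => by simp_all]
  refine sum_congr rfl fun c hc => congrArg card ?_
  ext x
  simp only [Set.mem_toFinset, Set.mem_ofPred_eq, mem_filter]
  exact ⟨fun h => ⟨⟨h.1, h.2 ▸ hc⟩, h.2⟩, fun h => ⟨h.1.1, h.2⟩⟩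

theorem exists_colors_abs_ncard_sub_mul_ncard_le {γ : Type*} [Finite γ] (A : ι → Set γ)
    (χ : γ → κ) (hΔ : 0 ≤ Δ) (hA : ∀ c, ∑ i, {x ∈ A i | χ x = c}.ncard ≤ Δ) {p : ℝ}
    (hp : p ∈ Set.Icc 0 1) :
    ∃ T : Set κ, ∀ i, |{x ∈ A i | χ x ∈ T}.ncard - p * (A i).ncard| ≤ Δ := by
  have := Fintype.ofFinite (Set.range χ)
  let χ' := Set.rangeFactorization χ
  obtain ⟨T, hT⟩ := exists_abs_sum_sub_mul_sum_le (w := fun i c => ({x ∈ A i | χ' x = c}.ncard : ℝ))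
    hΔ (fun c => by
      simpa [χ', Subtype.ext_iff, Set.rangeFactorization_coe] using hA c) hp
  refine ⟨{c | ∃ h : c ∈ Set.range χ, ⟨c, h⟩ ∈ T}, fun i => ?_⟩
  have hi := hT i
  simp only [← Nat.cast_sum, sum_ncard_sep_apply_eq, mem_univ, and_true] at hi
  have hsep : {x ∈ A i | ∃ h : χ x ∈ Set.range χ, ⟨χ x, h⟩ ∈ T} = {x ∈ A i | χ' x ∈ T} :=
    Set.ext fun x => and_congr_right fun _ => exists_prop_of_true ⟨x, rfl⟩
  rw [← hsep] at hi
  exact hi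

end BeckFiala

section Degrees

variable {α β : Type*} {G H : Set (α × β)}

/-- The degree of a vertex `a` of the first part in the bipartite graph with edge set `G`. Bipartite
graphs with parts `α` and `β` are encoded by their edge sets throughout. -/
noncomputable def leftDeg (G : Set (α × β)) (a : α) : ℕ := {b | (a, b) ∈ G}.ncard

/-- The degree of a vertex `b` of the second part in the bipartite graph with edge set `G`. -/
noncomputable def rightDeg (G : Set (α × β)) (b : β) : ℕ := {a | (a, b) ∈ G}.ncard

lemma ncard_swap_preimage (G : Set (α × β)) : (Prod.swap ⁻¹' G).ncard = G.ncard :=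
  Set.ncard_preimage_of_injective_subset_range Prod.swap_injective
    (by simp [Prod.swap_surjective.range_eq])

lemma leftDeg_le_leftDeg [Finite β] {a : α} (h : ∀ b, (a, b) ∈ G → (a, b) ∈ H) :
    leftDeg G a ≤ leftDeg H a :=
  Set.ncard_le_ncard h

lemma sum_leftDeg [Fintype α] [Finite β] (G : Set (α × β)) : ∑ a, leftDeg G a = G.ncard := by
  simp only [leftDeg, ← Nat.card_coe_set_eq]
  rw [← Nat.card_sigma]
  exact Nat.card_congr (Equiv.subtypeProdEquivSigmaSubtype fun a b => (a, b) ∈ G).symm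

variable [Finite α] [Finite β]

lemma ncard_le_ncard_mul_of_leftDeg_le {X : Set α} {k : ℝ} (hX : ∀ e ∈ G, e.1 ∈ X)
    (h : ∀ a ∈ X, leftDeg G a ≤ k) : (G.ncard : ℝ) ≤ X.ncard * k := by
  classical
  have := Fintype.ofFinite α
  have hsub : ∀ a ∉ X, leftDeg G a = 0 := fun a ha =>
    (Set.ncard_eq_zero).2 (Set.eq_empty_of_forall_notMem fun b hb => ha (hX _ hb))
  rw [← sum_leftDeg, ← sum_subset (subset_univ X.toFinset) (by simpa using hsub),
    Set.ncard_eq_toFinset_card', ← nsmul_eq_mul, Nat.cast_sum]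
  exact sum_le_card_nsmul _ _ _ fun a ha => h a (by simpa using ha)

lemma ncard_le_of_leftDeg_le {k : ℝ} (h : ∀ a, leftDeg G a ≤ k) :
    (G.ncard : ℝ) ≤ Nat.card α * k := by
  rw [← Set.ncard_univ]
  exact ncard_le_ncard_mul_of_leftDeg_le (fun _ _ => Set.mem_univ _) fun a _ => h a

lemma ncard_mul_le_of_le_leftDeg {X : Set α} {k : ℝ} (h : ∀ a ∈ X, k ≤ leftDeg G a) :
    X.ncard * k ≤ G.ncard := by
  classical
  have := Fintype.ofFinite α
  rw [← sum_leftDeg, Set.ncard_eq_toFinset_card', ← nsmul_eq_mul, Nat.cast_sum]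
  exact (card_nsmul_le_sum _ _ _ fun a ha => h a (by simpa using ha)).trans
    (sum_le_univ_sum_of_nonneg fun _ => Nat.cast_nonneg _)

end Degrees

section Switchings

variable {α β κ : Type*}

/-- The bijection `M` is a perfect matching of the bipartite graph with edge set `G`. Encoding
matchings as bijections lets them be switched by composing with permutations of `α`. -/
def IsPerfectMatching (G : Set (α × β)) (M : α ≃ β) : Prop := ∀ a, (a, M a) ∈ G

/-- The graph `G` has a perfect matching whose edges have pairwise distinct `χ`-colours. -/
def HasRainbowMatching (G : Set (α × β)) (χ : α × β → κ) : Prop :=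
  ∃ M, IsPerfectMatching G M ∧ Function.Injective fun a => χ (a, M a)

lemma HasRainbowMatching.mono {G H : Set (α × β)} {χ : α × β → κ} (h : HasRainbowMatching H χ)
    (hHG : H ⊆ G) : HasRainbowMatching G χ :=
  h.imp fun _ hM => ⟨fun a => hHG (hM.1 a), hM.2⟩

/-- Pairs `(u, v)` such that the three edges `a M(a)`, `u M(u)`, `v M(v)` of `M` can be replaced
by the edges `a M(u)`, `u M(v)`, `v M(a)` of `G`, completing a six-cycle. -/
def switchings (G : Set (α × β)) (M : α ≃ β) (a : α) : Set (α × α) :=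
  {e | (a, M e.1) ∈ G ∧ (e.1, M e.2) ∈ G ∧ (e.2, M a) ∈ G}

/-- The matching obtained from `M` by the switching `e` at `a`: for distinct `a`, `e.1`, `e.2` it
sends `a ↦ M e.1`, `e.1 ↦ M e.2` and `e.2 ↦ M a`. -/
def rotate [DecidableEq α] (M : α ≃ β) (a : α) (e : α × α) : α ≃ β :=
  (Equiv.swap a e.1 * Equiv.swap e.1 e.2).trans M

section Rotate

variable [DecidableEq α] {M : α ≃ β} {a : α} {e : α × α}

lemma rotate_apply_self (h₁ : e.1 ≠ a) (h₂ : e.2 ≠ a) : rotate M a e a = M e.1 := by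
  simp [rotate, Equiv.swap_apply_of_ne_of_ne h₁.symm h₂.symm]

lemma rotate_apply_fst (h₂ : e.2 ≠ a) (h₁₂ : e.1 ≠ e.2) : rotate M a e e.1 = M e.2 := by
  simp [rotate, Equiv.swap_apply_of_ne_of_ne h₂ h₁₂.symm]

lemma rotate_apply_snd : rotate M a e e.2 = M a := by
  simp [rotate]

lemma rotate_apply_of_ne {x : α} (ha : x ≠ a) (h₁ : x ≠ e.1) (h₂ : x ≠ e.2) :
    rotate M a e x = M x := by
  simp [rotate, Equiv.swap_apply_of_ne_of_ne h₁ h₂, Equiv.swap_apply_of_ne_of_ne ha h₁]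

lemma IsPerfectMatching.rotate {G : Set (α × β)} (hM : IsPerfectMatching G M)
    (he : e ∈ switchings G M a) (h₁ : e.1 ≠ a) (h₂ : e.2 ≠ a) (h₁₂ : e.1 ≠ e.2) :
    IsPerfectMatching G (rotate M a e) := by
  obtain ⟨ha, hu, hv⟩ := he
  intro x
  by_cases hxa : x = a
  · rwa [hxa, rotate_apply_self h₁ h₂]
  by_cases hxu : x = e.1
  · rwa [hxu, rotate_apply_fst h₂ h₁₂]
  by_cases hxv : x = e.2
  · rwa [hxv, rotate_apply_snd]
  rw [rotate_apply_of_ne hxa hxu hxv]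
  exact hM x

lemma apply_eq_of_rotate_apply_eq (h₂ : e.2 ≠ a) (h₁₂ : e.1 ≠ e.2) {u : α} {v : β}
    (hu : u ≠ a) (hv : v ≠ M a) (h : rotate M a e u = v) :
    (u = e.1 ∧ v = M e.2) ∨ M u = v := by
  have hu₂ : u ≠ e.2 := by
    rintro rfl
    exact hv (h.symm.trans rotate_apply_snd)
  by_cases hu₁ : u = e.1
  · subst hu₁
    exact Or.inl ⟨rfl, h.symm.trans (rotate_apply_fst h₂ h₁₂)⟩
  · exact Or.inr (by rwa [rotate_apply_of_ne hu hu₁ hu₂] at h)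

-- Double counting of the pairs `(M, e)`: such a pair is recovered from `rotate M a e` and `e.1`.
lemma ncard_mul_le_of_rotate_mem [Finite α] {F : Set (α ≃ β)} {a : α} {b : β}
    {V : (α ≃ β) → Set (α × α)} {k : ℝ}
    (hV : ∀ M ∈ F, M a = b → ∀ e ∈ V M, e.1 ≠ a ∧ e.2 ≠ a ∧ e.1 ≠ e.2 ∧ rotate M a e ∈ F)
    (hk : ∀ M ∈ F, k ≤ (V M).ncard) :
    {M ∈ F | M a = b}.ncard * k ≤ F.ncard * Nat.card α := by
  let P : Set ((α ≃ β) × (α × α)) := {q | q.1 ∈ {M ∈ F | M a = b} ∧ q.2 ∈ V q.1}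
  have hP : {M ∈ F | M a = b}.ncard * k ≤ P.ncard := by
    refine ncard_mul_le_of_le_leftDeg fun M hM => (hk M hM.1).trans ?_
    exact Nat.cast_le.2 (Set.ncard_le_ncard fun e he => (⟨hM, he⟩ : (M, e) ∈ P))
  have hPF : P.ncard ≤ (F ×ˢ (Set.univ : Set α)).ncard := by
    refine Set.ncard_le_ncard_of_injOn (fun q => (rotate q.1 a q.2, q.2.1))
      (fun q hq => ⟨(hV q.1 hq.1.1 hq.1.2 q.2 hq.2).2.2.2, Set.mem_univ _⟩) ?_
    rintro ⟨M, u, v⟩ ⟨⟨_, hMa⟩, _⟩ ⟨M', u', v'⟩ ⟨⟨_, hMa'⟩, _⟩ h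
    obtain ⟨hrot, rfl⟩ : rotate M a (u, v) = rotate M' a (u', v') ∧ u = u' := by simpa using h
    obtain rfl : v = v' := by
      refine (rotate M a (u, v)).injective ?_
      rw [rotate_apply_snd, hrot, rotate_apply_snd, hMa, hMa']
    have : M = M' := Equiv.ext fun x => by
      simpa [rotate] using
        DFunLike.congr_fun hrot ((Equiv.swap a u * Equiv.swap u v).symm x)
    rw [this]
  rw [Set.ncard_prod, Set.ncard_univ] at hPF
  exact hP.trans (mod_cast hPF)

end Rotate

variable {G : Set (α × β)} {χ : α × β → κ} {m : ℝ}

/-- Every colour of `χ` appears on at most `m` edges of `G`. -/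
def IsBoundedColoring (G : Set (α × β)) (χ : α × β → κ) (m : ℝ) : Prop :=
  ∀ c, {e ∈ G | χ e = c}.ncard ≤ m

lemma IsBoundedColoring.mono [Finite α] [Finite β] (h : IsBoundedColoring G χ m)
    {H : Set (α × β)} (hHG : H ⊆ G) : IsBoundedColoring H χ m :=
  fun c =>
    have hsub : {e ∈ H | χ e = c} ⊆ {e ∈ G | χ e = c} := fun _ he => ⟨hHG he.1, he.2⟩
    (Nat.cast_le.2 (Set.ncard_le_ncard hsub)).trans (h c)

/-- Switchings of `M` at a vertex of `Z` that move no other vertex of `Z` and whose edge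
`e.1 M(e.2)` has a colour not occurring in `M`. -/
def goodSwitchings (G : Set (α × β)) (χ : α × β → κ) (Z : Set α) (M : α ≃ β) (a : α) :
    Set (α × α) :=
  {e ∈ switchings G M a | e.1 ∉ Z ∧ e.2 ∉ Z ∧ e.1 ≠ e.2 ∧ ∀ x, χ (e.1, M e.2) ≠ χ (x, M x)}

lemma IsBoundedColoring.ncard_apply_eq_apply_le [Finite α] [Finite β]
    (hχ : IsBoundedColoring G χ m) (M : α ≃ β) :
    {e : α × α | (e.1, M e.2) ∈ G ∧ ∃ x, χ (e.1, M e.2) = χ (x, M x)}.ncard ≤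
      Nat.card α * m := by
  let P : Set (α × (α × β)) := {q | q.2 ∈ G ∧ χ q.2 = χ (q.1, M q.1)}
  have hP : P.ncard ≤ Nat.card α * m := ncard_le_of_leftDeg_le fun x => hχ (χ (x, M x))
  refine le_trans (Nat.cast_le.2 ?_) hP
  refine (Set.ncard_le_ncard_of_injOn (t := Prod.snd '' P) (fun e => (e.1, M e.2)) ?_ ?_).trans
    (Set.ncard_image_le P.toFinite)
  · rintro e ⟨heG, x, hx⟩
    exact ⟨(x, (e.1, M e.2)), ⟨heG, hx⟩, rfl⟩
  · rintro ⟨u, v⟩ _ ⟨u', v'⟩ _ h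
    simpa using h

lemma ncard_switchings_le [Finite α] [Finite β] (hχ : IsBoundedColoring G χ m) (Z : Set α)
    (M : α ≃ β) (a : α) :
    (switchings G M a).ncard ≤
      (goodSwitchings G χ Z M a).ncard + Nat.card α * (2 * Z.ncard + 1 + m) := by
  let B : Set (α × α) := {e | (e.1, M e.2) ∈ G ∧ ∃ x, χ (e.1, M e.2) = χ (x, M x)}
  have hcover : switchings G M a ⊆ goodSwitchings G χ Z M a ∪
      (Z ×ˢ Set.univ ∪ Set.univ ×ˢ Z ∪ Set.range (fun x => (x, x)) ∪ B) := by
    rintro ⟨u, v⟩ he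
    by_contra h
    simp only [Set.mem_union, Set.mem_prod, Set.mem_univ, true_and, and_true, not_or,
      Set.mem_range, Prod.mk.injEq, not_exists, not_and] at h
    obtain ⟨hgood, ⟨⟨hu, hv⟩, huv⟩, hB⟩ := h
    exact hgood ⟨he, hu, hv, huv u rfl, fun x hx => hB ⟨he.2.1, x, hx⟩⟩
  have hdiag : (Set.range fun x : α => (x, x)).ncard ≤ Nat.card α := by
    rw [← Set.image_univ, ← Set.ncard_univ]
    exact Set.ncard_image_le
  have hcard : (switchings G M a).ncard ≤ (goodSwitchings G χ Z M a).ncard +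
      (Z.ncard * Nat.card α + Nat.card α * Z.ncard + Nat.card α + B.ncard) := by
    refine (Set.ncard_le_ncard hcover).trans ?_
    grw [Set.ncard_union_le, Set.ncard_union_le, Set.ncard_union_le, Set.ncard_union_le, hdiag,
      Set.ncard_prod, Set.ncard_prod, Set.ncard_univ]
  have hB : B.ncard ≤ Nat.card α * m := hχ.ncard_apply_eq_apply_le M
  have : ((switchings G M a).ncard : ℝ) ≤ (goodSwitchings G χ Z M a).ncard +
      (Z.ncard * Nat.card α + Nat.card α * Z.ncard + Nat.card α + B.ncard) := mod_cast hcard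
  linarith

lemma half_mul_sq_le_ncard_goodSwitchings [Finite α] [Finite β] {n : ℕ} (hα : Nat.card α = n)
    {c μ : ℝ} (hμ : 4 * μ ≤ c) (hn : 20 ≤ c * n) (hχ : IsBoundedColoring G χ (μ * n)) {Z : Set α}
    (hZ : Z.ncard ≤ 2) {M : α ≃ β} {a : α} (h : c * n ^ 2 ≤ (switchings G M a).ncard) :
    c / 2 * n ^ 2 ≤ (goodSwitchings G χ Z M a).ncard := by
  have hloss := ncard_switchings_le hχ Z M a
  have hZ' : (Z.ncard : ℝ) ≤ 2 := mod_cast hZ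
  rw [hα] at hloss
  nlinarith [mul_le_mul_of_nonneg_left hZ' n.cast_nonneg, mul_le_mul_of_nonneg_left hn
    n.cast_nonneg, mul_le_mul_of_nonneg_left hμ (sq_nonneg (n : ℝ))]

end Switchings

section Conflicts

variable {α β κ : Type*} {G : Set (α × β)} {χ : α × β → κ} {S : Set ((α × β) × (α × β))}

/-- Ordered pairs of disjoint edges of `G` with the same colour. -/
def conflicts (G : Set (α × β)) (χ : α × β → κ) : Set ((α × β) × (α × β)) :=
  {q | q.1 ∈ G ∧ q.2 ∈ G ∧ χ q.1 = χ q.2 ∧ q.1.1 ≠ q.2.1 ∧ q.1.2 ≠ q.2.2}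

lemma swap_mem_conflicts {q : (α × β) × (α × β)} (hq : q ∈ conflicts G χ) :
    q.swap ∈ conflicts G χ :=
  ⟨hq.2.1, hq.1, hq.2.2.1.symm, hq.2.2.2.1.symm, hq.2.2.2.2.symm⟩

/-- The perfect matchings of `G` that do not contain both edges of any pair in `S`. -/
def matchingsAvoiding (G : Set (α × β)) (S : Set ((α × β) × (α × β))) : Set (α ≃ β) :=
  {M | IsPerfectMatching G M ∧ ∀ q ∈ S, ¬(M q.1.1 = q.1.2 ∧ M q.2.1 = q.2.2)}

lemma hasRainbowMatching_of_mem_matchingsAvoiding {M : α ≃ β}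
    (hM : M ∈ matchingsAvoiding G (conflicts G χ)) : HasRainbowMatching G χ := by
  refine ⟨M, hM.1, fun a a' haa' => ?_⟩
  by_contra hne
  exact hM.2 ((a, M a), (a', M a'))
    ⟨hM.1 a, hM.1 a', haa', hne, fun h => hne (M.injective h)⟩ ⟨rfl, rfl⟩

/-- All pairs, edges or not, meeting one of the four ends of `q`. The conflicts with a member here
form the dependency neighbourhood of `q` in the local lemma. -/
def touching (q : (α × β) × (α × β)) : Set (α × β) :=
  {e | e.1 = q.1.1 ∨ e.1 = q.2.1 ∨ e.2 = q.1.2 ∨ e.2 = q.2.2}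

-- The switching creates at most one edge that can occur in a pair of `S`, and its colour is new.
lemma rotate_mem_matchingsAvoiding [DecidableEq α] {M : α ≃ β} {Z : Set α} {a : α} {e : α × α}
    (hM : M ∈ matchingsAvoiding G S) (haZ : a ∈ Z) (he : e ∈ goodSwitchings G χ Z M a)
    (hS : ∀ q ∈ S, q ∈ conflicts G χ ∧
      (q.1.1 ≠ a ∧ q.1.2 ≠ M a) ∧ (q.2.1 ≠ a ∧ q.2.2 ≠ M a)) :
    rotate M a e ∈ matchingsAvoiding G S := by
  obtain ⟨hsw, h₁, h₂, h₁₂, hnew⟩ := he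
  have h₁a : e.1 ≠ a := fun h => h₁ (h ▸ haZ)
  have h₂a : e.2 ≠ a := fun h => h₂ (h ▸ haZ)
  refine ⟨hM.1.rotate hsw h₁a h₂a h₁₂, ?_⟩
  rintro ⟨⟨u, v⟩, u', v'⟩ hq ⟨hu, hu'⟩
  obtain ⟨⟨-, -, hcol, hne, -⟩, ⟨hua, hva⟩, hua', hva'⟩ := hS _ hq
  rcases apply_eq_of_rotate_apply_eq h₂a h₁₂ hua hva hu with ⟨rfl, rfl⟩ | hold <;>
    rcases apply_eq_of_rotate_apply_eq h₂a h₁₂ hua' hva' hu' with ⟨rfl, rfl⟩ | hold'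
  · exact hne rfl
  · obtain rfl : M u' = v' := hold'
    exact hnew u' hcol
  · obtain rfl : M u = v := hold
    exact hnew u hcol.symm
  · exact hM.2 _ hq ⟨hold, hold'⟩

variable [Finite α] [Finite β] {n : ℕ} {c μ : ℝ}

lemma ncard_matchingsAvoiding_apply_eq_mul_le (hα : Nat.card α = n) (hμ : 4 * μ ≤ c)
    (hn : 20 ≤ c * n) (hχ : IsBoundedColoring G χ (μ * n)) {a : α} {b : β}
    (hS : ∀ q ∈ S, q ∈ conflicts G χ ∧ (q.1.1 ≠ a ∧ q.1.2 ≠ b) ∧ (q.2.1 ≠ a ∧ q.2.2 ≠ b))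
    (hsw : ∀ M, IsPerfectMatching G M → c * n ^ 2 ≤ (switchings G M a).ncard)
    {Z : Set α} (hZ : Z.ncard ≤ 1) (haZ : a ∉ Z) (f : α → β) :
    {M ∈ {M ∈ matchingsAvoiding G S | ∀ z ∈ Z, M z = f z} | M a = b}.ncard * (c / 2 * n) ≤
      {M ∈ matchingsAvoiding G S | ∀ z ∈ Z, M z = f z}.ncard := by
  classical
  set F := {M ∈ matchingsAvoiding G S | ∀ z ∈ Z, M z = f z}
  have hcount : {M ∈ F | M a = b}.ncard * (c / 2 * n ^ 2) ≤ F.ncard * Nat.card α := by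
    refine ncard_mul_le_of_rotate_mem (V := fun M => goodSwitchings G χ (insert a Z) M a)
      (fun M hM hMa e he => ?_) fun M hM => ?_
    · have hdisj : ∀ z ∈ insert a Z, e.1 ≠ z ∧ e.2 ≠ z := fun z hz =>
        ⟨fun h => he.2.1 (h ▸ hz), fun h => he.2.2.1 (h ▸ hz)⟩
      obtain ⟨h₁, h₂⟩ := hdisj a (Set.mem_insert a Z)
      refine ⟨h₁, h₂, he.2.2.2.1, ?_, fun z hz => ?_⟩
      · exact rotate_mem_matchingsAvoiding hM.1 (Set.mem_insert a Z) he (hMa ▸ hS)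
      · obtain ⟨h₁, h₂⟩ := hdisj z (Set.mem_insert_of_mem a hz)
        rw [rotate_apply_of_ne (ne_of_mem_of_not_mem hz haZ) h₁.symm h₂.symm]
        exact hM.2 z hz
    · exact half_mul_sq_le_ncard_goodSwitchings hα hμ hn hχ
        ((Set.ncard_insert_le a Z).trans (by lia)) (hsw M hM.1.1)
  have hn0 : (0 : ℝ) < n := Nat.cast_pos.2 (Nat.pos_of_ne_zero fun h => by norm_num [h] at hn)
  rw [hα] at hcount
  exact le_of_mul_le_mul_right (by linarith) hn0

lemma ncard_matchingsAvoiding_conflict_le (hα : Nat.card α = n) (hμ : 4 * μ ≤ c)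
    (hn : 20 ≤ c * n) (hχ : IsBoundedColoring G χ (μ * n)) (hS : S ⊆ conflicts G χ)
    (hsw : ∀ M, IsPerfectMatching G M → ∀ q ∈ conflicts G χ,
      c * n ^ 2 ≤ (switchings G M q.1.1).ncard)
    {q : (α × β) × (α × β)} (hq : q ∈ conflicts G χ)
    (hqS : ∀ r ∈ S, r.1 ∉ touching q ∧ r.2 ∉ touching q) :
    {M ∈ matchingsAvoiding G S | M q.1.1 = q.1.2 ∧ M q.2.1 = q.2.2}.ncard ≤
      4 / (c * n) ^ 2 * (matchingsAvoiding G S).ncard := by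
  obtain ⟨⟨a, b⟩, a', b'⟩ := q
  have hdisj : ∀ r ∈ S, ((r.1.1 ≠ a ∧ r.1.2 ≠ b) ∧ (r.2.1 ≠ a ∧ r.2.2 ≠ b)) ∧
      ((r.1.1 ≠ a' ∧ r.1.2 ≠ b') ∧ (r.2.1 ≠ a' ∧ r.2.2 ≠ b')) := fun r hr => by
    have := hqS r hr
    simp only [touching, Set.mem_ofPred_eq, not_or] at this
    tauto
  set F := matchingsAvoiding G S
  have h₂ : {M ∈ F | M a' = b'}.ncard * (c / 2 * n) ≤ F.ncard := by
    simpa using ncard_matchingsAvoiding_apply_eq_mul_le hα hμ hn hχ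
      (fun r hr => ⟨hS hr, (hdisj r hr).2⟩)
      (fun M hM => hsw M hM ((a', b'), _) (swap_mem_conflicts hq)) (Z := ∅) (by simp) (by simp)
      fun _ => b'
  have h₁ : {M ∈ F | M a = b ∧ M a' = b'}.ncard * (c / 2 * n) ≤
      {M ∈ F | M a' = b'}.ncard := by
    simpa [and_assoc, and_comm (a := _ = b)] using ncard_matchingsAvoiding_apply_eq_mul_le hα hμ
      hn hχ (fun r hr => ⟨hS hr, (hdisj r hr).1⟩) (fun M hM => hsw M hM ((a, b), _) hq)
      (Z := {a'}) (by simp) hq.2.2.2.1 fun _ => b'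
  have hcn : 0 < c * n := by linarith
  rw [div_mul_eq_mul_div, le_div_iff₀ (pow_pos hcn 2)]
  linarith [mul_le_mul_of_nonneg_right h₁ (show 0 ≤ c / 2 * n by linarith)]

lemma ncard_touching_le (hα : Nat.card α = n) (hβ : Nat.card β = n) (q : (α × β) × (α × β)) :
    (touching q).ncard ≤ 4 * n := by
  have hcover : touching q ⊆ {q.1.1, q.2.1} ×ˢ Set.univ ∪ Set.univ ×ˢ {q.1.2, q.2.2} := by
    rintro e (h | h | h | h) <;> simp [h]
  refine (Set.ncard_le_ncard hcover).trans ((Set.ncard_union_le _ _).trans ?_)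
  have hα₂ : ({q.1.1, q.2.1} : Set α).ncard ≤ 2 := (Set.ncard_insert_le _ _).trans (by simp)
  have hβ₂ : ({q.1.2, q.2.2} : Set β).ncard ≤ 2 := (Set.ncard_insert_le _ _).trans (by simp)
  rw [Set.ncard_prod, Set.ncard_prod, Set.ncard_univ, Set.ncard_univ, hα, hβ]
  nlinarith

variable {m : ℝ}

lemma ncard_conflicts_fst_mem_le (hχ : IsBoundedColoring G χ m) (D : Set (α × β)) :
    {q ∈ conflicts G χ | q.1 ∈ D}.ncard ≤ D.ncard * m := by
  refine ncard_le_ncard_mul_of_leftDeg_le (fun q hq => hq.2) fun e _ => le_trans ?_ (hχ (χ e))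
  exact Nat.cast_le.2 (Set.ncard_le_ncard fun f hf => ⟨hf.1.2.1, hf.1.2.2.1.symm⟩)

lemma ncard_conflicts_touching_le (hα : Nat.card α = n) (hβ : Nat.card β = n)
    (hχ : IsBoundedColoring G χ m) (hm : 0 ≤ m) (q : (α × β) × (α × β)) :
    {r ∈ conflicts G χ | r.1 ∈ touching q ∨ r.2 ∈ touching q}.ncard ≤ 8 * n * m := by
  set T := {r ∈ conflicts G χ | r.1 ∈ touching q}
  have hcover : {r ∈ conflicts G χ | r.1 ∈ touching q ∨ r.2 ∈ touching q} ⊆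
      T ∪ Prod.swap ⁻¹' T := by
    rintro r ⟨hr, h | h⟩
    exacts [Or.inl ⟨hr, h⟩, Or.inr ⟨swap_mem_conflicts hr, h⟩]
  have hT : (T.ncard : ℝ) ≤ 4 * n * m := (ncard_conflicts_fst_mem_le hχ _).trans <|
    mul_le_mul_of_nonneg_right (mod_cast ncard_touching_le hα hβ q) hm
  have hle := (Set.ncard_le_ncard hcover).trans (Set.ncard_union_le _ _)
  rw [ncard_swap_preimage] at hle
  calc _ ≤ ((T.ncard + T.ncard : ℕ) : ℝ) := Nat.cast_le.2 hle
    _ ≤ 8 * n * m := by push_cast; linarith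

-- The local lemma for a uniformly random perfect matching: switchings show that a conflict occurs
-- with conditional probability at most `4 / (c n) ^ 2`, and each conflict touches at most
-- `8 μ n ^ 2` others.
theorem hasRainbowMatching_of_switchings (hα : Nat.card α = n) (hc : c ≤ 1) (hμ₀ : 0 ≤ μ)
    (hμ : 128 * μ ≤ c ^ 2) (hn : 20 ≤ c * n) (hχ : IsBoundedColoring G χ (μ * n))
    (hG : ∃ M, IsPerfectMatching G M)
    (hsw : ∀ M, IsPerfectMatching G M → ∀ q ∈ conflicts G χ,
      c * n ^ 2 ≤ (switchings G M q.1.1).ncard) :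
    HasRainbowMatching G χ := by
  obtain ⟨M₀, hM₀⟩ := hG
  have hβ : Nat.card β = n := Nat.card_congr M₀ ▸ hα
  have hn0 : (0 : ℝ) < n := Nat.cast_pos.2 (Nat.pos_of_ne_zero fun h => by norm_num [h] at hn)
  have hc0 : 0 < c := pos_of_mul_pos_left (by linarith) hn0.le
  have hp : 4 / (c * n) ^ 2 ≤ 1 / 4 := by
    rw [div_le_div_iff₀ (by positivity) (by norm_num)]
    nlinarith
  have hnear : ∀ q ∈ conflicts G χ, 4 * (4 / (c * n) ^ 2) *
      {r ∈ conflicts G χ | r.1 ∈ touching q ∨ r.2 ∈ touching q}.ncard ≤ 1 := fun q _ => by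
    have h8 := ncard_conflicts_touching_le hα hβ hχ (by positivity) q
    calc _ ≤ 4 * (4 / (c * n) ^ 2) * (8 * n * (μ * n)) := by gcongr
      _ = 128 * μ / c ^ 2 := by field_simp; ring
      _ ≤ 1 := (div_le_one (by positivity)).2 hμ
  obtain ⟨M, hM, hav⟩ := exists_forall_notMem_of_lopsided (U := {M | IsPerfectMatching G M})
    (A := fun q => {M : α ≃ β | M q.1.1 = q.1.2 ∧ M q.2.1 = q.2.2}) ⟨M₀, hM₀⟩
    (by positivity) hp hnear fun q hq S hS hdisj => by
      have hle := ncard_matchingsAvoiding_conflict_le hα (by nlinarith) hn hχ hS hsw hq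
        fun r hr => not_or.1 fun h => Set.disjoint_left.1 hdisj hr ⟨hS hr, h⟩
      refine le_trans (Nat.cast_le.2 (Set.ncard_le_ncard ?_)) hle
      exact fun M hM => ⟨⟨hM.1, hM.2.2⟩, hM.2.1⟩
  exact hasRainbowMatching_of_mem_matchingsAvoiding ⟨hM, hav⟩

end Conflicts

section Hall

variable {α β : Type*} {G : Set (α × β)}

theorem exists_isPerfectMatching_of_inter_prod_nonempty [Finite α] [Finite β]
    (hcard : Nat.card α = Nat.card β)
    (h : ∀ (X : Set α) (Y : Set β), Nat.card α < X.ncard + Y.ncard → (G ∩ X ×ˢ Y).Nonempty) :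
    ∃ M, IsPerfectMatching G M := by
  classical
  have := Fintype.ofFinite α
  have := Fintype.ofFinite β
  obtain ⟨f, hf, hfG⟩ := (Fintype.all_card_le_filter_rel_iff_exists_injective
    fun a b => (a, b) ∈ G).1 fun X => by
      by_contra! hlt
      set N : Finset β := {b | ∃ a ∈ X, (a, b) ∈ G} with hN
      obtain ⟨⟨a, b⟩, hG, ha, hb⟩ := h X (↑Nᶜ) <| by
        rw [Set.ncard_coe_finset, Set.ncard_coe_finset, card_compl, hcard,
          Nat.card_eq_fintype_card]
        have := N.card_le_univ
        lia
      simp only [coe_compl, Set.mem_compl_iff, mem_coe, hN, mem_filter_univ] at hb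
      exact hb ⟨a, ha, hG⟩
  exact ⟨.ofBijective f ((Nat.bijective_iff_injective_and_card f).2 ⟨hf, hcard⟩), hfG⟩

lemma leftDeg_add_ncard_le_leftDeg_inter_add [Finite β] {X : Set α} (Y : Set β) {a : α}
    (ha : a ∈ X) : leftDeg G a + Y.ncard ≤ leftDeg (G ∩ X ×ˢ Y) a + Nat.card β := by
  have hinter : {b | (a, b) ∈ G ∩ X ×ˢ Y} = {b | (a, b) ∈ G} ∩ Y :=
    Set.ext fun b => ⟨fun h => ⟨h.1, h.2.2⟩, fun h => ⟨h.1, ha, h.2⟩⟩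
  rw [leftDeg, leftDeg, hinter, ← Set.ncard_inter_add_ncard_union, ← Set.ncard_univ]
  exact Nat.add_le_add_left (Set.ncard_le_ncard (Set.subset_univ _)) _

lemma leftDeg_add_ncard_le [Finite β] {X : Set α} {Y : Set β} (h : ¬(G ∩ X ×ˢ Y).Nonempty) {a : α}
    (ha : a ∈ X) : leftDeg G a + Y.ncard ≤ Nat.card β := by
  have := leftDeg_add_ncard_le_leftDeg_inter_add (G := G) Y ha
  simpa [Set.not_nonempty_iff_eq_empty.1 h, leftDeg] using this

lemma rightDeg_add_ncard_le [Finite α] {X : Set α} {Y : Set β} (h : ¬(G ∩ X ×ˢ Y).Nonempty) {b : β}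
    (hb : b ∈ Y) : rightDeg G b + X.ncard ≤ Nat.card α :=
  leftDeg_add_ncard_le (G := Prod.swap ⁻¹' G)
    (fun ⟨e, he⟩ => h ⟨e.swap, he.1, he.2.2, he.2.1⟩) hb

theorem exists_isPerfectMatching_of_le_deg [Finite α] [Finite β] (hcard : Nat.card α = Nat.card β)
    {k : ℝ} (hk : 0 ≤ k) (hα : ∀ a, k ≤ leftDeg G a) (hβ : ∀ b, k ≤ rightDeg G b)
    (hG : Gᶜ.ncard ≤ k ^ 2) :
    ∃ M, IsPerfectMatching G M := by
  refine exists_isPerfectMatching_of_inter_prod_nonempty hcard fun X Y hXY => ?_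
  by_contra hne
  have hXα : X.ncard ≤ Nat.card α := Set.ncard_univ α ▸ Set.ncard_le_ncard X.subset_univ
  have hYβ : Y.ncard ≤ Nat.card β := Set.ncard_univ β ▸ Set.ncard_le_ncard Y.subset_univ
  obtain ⟨a, ha⟩ := Set.nonempty_of_ncard_ne_zero (s := X) (by lia)
  obtain ⟨b, hb⟩ := Set.nonempty_of_ncard_ne_zero (s := Y) (by lia)
  have hX : k < X.ncard := (hα a).trans_lt <| Nat.cast_lt.2 <| by
    have := leftDeg_add_ncard_le hne ha
    lia
  have hY : k < Y.ncard := (hβ b).trans_lt <| Nat.cast_lt.2 <| by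
    have := rightDeg_add_ncard_le hne hb
    lia
  have hprod : X.ncard * Y.ncard ≤ Gᶜ.ncard := by
    rw [← Set.ncard_prod]
    exact Set.ncard_le_ncard fun e he hG => hne ⟨e, hG, he⟩
  have : (X.ncard * Y.ncard : ℝ) ≤ Gᶜ.ncard := mod_cast hprod
  nlinarith

end Hall

section Dirac

variable {α β κ : Type*} {G : Set (α × β)} {χ : α × β → κ} {n : ℕ} {c μ : ℝ}

/-- `G` is a Dirac bipartite graph: both parts have size `n`, all degrees are at least `n / 2`
(doubled, to avoid truncated division). -/
structure IsDirac (G : Set (α × β)) (n : ℕ) : Prop where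
  card_left : Nat.card α = n
  card_right : Nat.card β = n
  le_leftDeg : ∀ a, n ≤ 2 * leftDeg G a
  le_rightDeg : ∀ b, n ≤ 2 * rightDeg G b

lemma IsDirac.swap (hG : IsDirac G n) : IsDirac (Prod.swap ⁻¹' G) n :=
  ⟨hG.card_right, hG.card_left, hG.le_rightDeg, hG.le_leftDeg⟩

lemma ncard_inter_prod_le_ncard_switchings [Finite α] (G : Set (α × β)) (M : α ≃ β) (a : α) :
    (G ∩ (M ⁻¹' {b | (a, b) ∈ G}) ×ˢ (M '' {x | (x, M a) ∈ G})).ncard ≤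
      (switchings G M a).ncard := by
  refine Set.ncard_le_ncard_of_injOn (fun e => (e.1, M.symm e.2)) ?_ ?_
  · rintro ⟨u, _⟩ ⟨hG, hu, v, hv, rfl⟩
    simpa [switchings] using ⟨hu, hG, hv⟩
  · rintro ⟨u, v⟩ _ ⟨u', v'⟩ _ h
    simpa using h

lemma ncard_preimage_leftNbrs (M : α ≃ β) (a : α) :
    (M ⁻¹' {b | (a, b) ∈ G}).ncard = leftDeg G a :=
  Set.ncard_preimage_of_injective_subset_range M.injective (by simp [M.surjective.range_eq])

lemma ncard_image_rightNbrs (M : α ≃ β) (b : β) :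
    (M '' {x | (x, b) ∈ G}).ncard = rightDeg G b :=
  Set.ncard_image_of_injective _ M.injective

variable [Finite α] [Finite β]

lemma IsDirac.exists_isPerfectMatching (hG : IsDirac G n) : ∃ M, IsPerfectMatching G M := by
  obtain ⟨hα, hβ, hdeg, hdeg'⟩ := hG
  refine exists_isPerfectMatching_of_inter_prod_nonempty (hα.trans hβ.symm) fun X Y hXY => ?_
  by_contra hne
  have hXα : X.ncard ≤ Nat.card α := Set.ncard_univ α ▸ Set.ncard_le_ncard X.subset_univ
  have hYβ : Y.ncard ≤ Nat.card β := Set.ncard_univ β ▸ Set.ncard_le_ncard Y.subset_univ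
  obtain ⟨a, ha⟩ := Set.nonempty_of_ncard_ne_zero (s := X) (by lia)
  obtain ⟨b, hb⟩ := Set.nonempty_of_ncard_ne_zero (s := Y) (by lia)
  have := leftDeg_add_ncard_le hne ha
  have := rightDeg_add_ncard_le hne hb
  have := hdeg a
  have := hdeg' b
  lia

theorem IsDirac.hasRainbowMatching_of_dense (hG : IsDirac G n) (hc : c ≤ 1) (hμ₀ : 0 ≤ μ)
    (hμ : 128 * μ ≤ c ^ 2) (hn : 20 ≤ c * n) (hχ : IsBoundedColoring G χ (μ * n))
    (hdense : ∀ (X : Set α) (Y : Set β), n ≤ 2 * X.ncard → n ≤ 2 * Y.ncard →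
      c * n ^ 2 ≤ (G ∩ X ×ˢ Y).ncard) :
    HasRainbowMatching G χ := by
  refine hasRainbowMatching_of_switchings hG.card_left hc hμ₀ hμ hn hχ hG.exists_isPerfectMatching
    fun M _ q _ => (hdense _ _ ?_ ?_).trans
      (Nat.cast_le.2 (ncard_inter_prod_le_ncard_switchings G M q.1.1))
  · exact ncard_preimage_leftNbrs (G := G) M _ ▸ hG.le_leftDeg _
  · exact ncard_image_rightNbrs (G := G) M _ ▸ hG.le_rightDeg _

end Dirac

section Clusters

variable {α β ι κ : Type*} {G : Set (α × β)} {χ : α × β → κ}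

lemma exists_isPerfectMatching_of_fibers (la : α → ι) (lb : β → ι)
    (h : ∀ i, ∃ M : {a // la a = i} ≃ {b // lb b = i}, ∀ a, (a.1, (M a).1) ∈ G) :
    ∃ M, IsPerfectMatching G M := by
  choose M hM using h
  exact ⟨(Equiv.sigmaFiberEquiv la).symm.trans <|
    (Equiv.sigmaCongrRight M).trans (Equiv.sigmaFiberEquiv lb), fun a => hM (la a) ⟨a, rfl⟩⟩

variable [Finite α] [Finite β] {la : α → Option ι} {lb : β → Option ι} {n : ℕ} {ρ μ : ℝ}

lemma exists_equiv_fiber (hl : ∀ e ∈ G, la e.1 = lb e.2) {i : ι}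
    (hcard : {a | la a = some i}.ncard = {b | lb b = some i}.ncard) {k : ℝ} (hk : 0 ≤ k)
    (hα : ∀ a, la a ≠ none → k ≤ leftDeg G a) (hβ : ∀ b, lb b ≠ none → k ≤ rightDeg G b)
    (hG : {e | la e.1 ≠ none ∧ la e.1 = lb e.2 ∧ e ∉ G}.ncard ≤ k ^ 2) :
    ∃ M : {a // la a = some i} ≃ {b // lb b = some i}, ∀ a, (a.1, (M a).1) ∈ G := by
  let f : {a // la a = some i} × {b // lb b = some i} → α × β := Prod.map (·.1) (·.1)
  refine exists_isPerfectMatching_of_le_deg (G := f ⁻¹' G) hcard hk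
    (fun ⟨a, ha⟩ => (hα a (by simp [ha])).trans ?_) (fun ⟨b, hb⟩ => (hβ b (by simp [hb])).trans ?_)
    (le_trans ?_ hG)
  · refine (congrArg Nat.cast (Set.ncard_preimage_of_injective_subset_range
      (s := {b | (a, b) ∈ G}) Subtype.val_injective fun b hb => ?_)).ge
    exact ⟨⟨b, (hl _ hb).symm.trans ha⟩, rfl⟩
  · refine (congrArg Nat.cast (Set.ncard_preimage_of_injective_subset_range
      (s := {a | (a, b) ∈ G}) Subtype.val_injective fun a ha => ?_)).ge
    exact ⟨⟨a, (hl _ ha).trans hb⟩, rfl⟩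
  · refine Nat.cast_le.2 (Set.ncard_le_ncard_of_injOn f (fun e he => ?_) fun e _ e' _ h => ?_)
    · exact ⟨by simp [f, e.1.2], e.1.2.trans e.2.2.symm, he⟩
    · simpa [f, Prod.ext_iff, Subtype.ext_iff] using h

lemma le_ncard_switchings_of_clusters (hl : ∀ e ∈ G, la e.1 = lb e.2) {s k : ℝ} (hs : 0 ≤ s)
    (hα : ∀ a, la a ≠ none → s ≤ leftDeg G a) (hβ : ∀ b, lb b ≠ none → s ≤ rightDeg G b)
    (hG : {e | la e.1 ≠ none ∧ la e.1 = lb e.2 ∧ e ∉ G}.ncard ≤ s ^ 2 - k) {M : α ≃ β}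
    (hM : IsPerfectMatching G M) {a : α} (ha : la a ≠ none) :
    k ≤ (switchings G M a).ncard := by
  set X := M ⁻¹' {b | (a, b) ∈ G}
  set Y := M '' {x | (x, M a) ∈ G}
  have hX : s ≤ X.ncard := (hα a ha).trans_eq (congrArg Nat.cast (ncard_preimage_leftNbrs M a).symm)
  have hY : s ≤ Y.ncard := (hβ (M a) (hl _ (hM a) ▸ ha)).trans_eq
    (congrArg Nat.cast (ncard_image_rightNbrs M (M a)).symm)
  have hlX : ∀ u ∈ X, la u = la a := fun u hu => (hl _ (hM u)).trans (hl _ hu).symm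
  have hlY : ∀ w ∈ Y, lb w = la a := by
    rintro _ ⟨v, hv, rfl⟩
    exact (hl _ (hM v)).symm.trans ((hl _ hv).trans (hl _ (hM a)).symm)
  have hmiss : X ×ˢ Y \ G ⊆ {e | la e.1 ≠ none ∧ la e.1 = lb e.2 ∧ e ∉ G} := fun e he =>
    ⟨hlX e.1 he.1.1 ▸ ha, (hlX e.1 he.1.1).trans (hlY e.2 he.1.2).symm, he.2⟩
  have hcount := Set.ncard_inter_add_ncard_sdiff_eq_ncard (X ×ˢ Y) G
  rw [Set.inter_comm, Set.ncard_prod] at hcount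
  have hcount : ((G ∩ X ×ˢ Y).ncard + (X ×ˢ Y \ G).ncard : ℝ) = X.ncard * Y.ncard :=
    mod_cast hcount
  have hmiss : ((X ×ˢ Y \ G).ncard : ℝ) ≤ s ^ 2 - k :=
    (Nat.cast_le.2 (Set.ncard_le_ncard hmiss)).trans hG
  have hsw : ((G ∩ X ×ˢ Y).ncard : ℝ) ≤ (switchings G M a).ncard :=
    Nat.cast_le.2 (ncard_inter_prod_le_ncard_switchings G M a)
  nlinarith

-- The vertices labelled `none` are matched once and for all; every other fibre spans a nearly
-- complete bipartite graph, so its vertices have many switchings.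
theorem hasRainbowMatching_of_clusters (hα : Nat.card α = n) (hρ₀ : 0 ≤ ρ) (hρ : ρ ≤ 1)
    (hμ₀ : 0 ≤ μ) (hμ : 512 * μ ≤ ρ ^ 4) (hn : 40 ≤ ρ ^ 2 * n)
    (hχ : IsBoundedColoring G χ (μ * n)) (hl : ∀ e ∈ G, la e.1 = lb e.2)
    (hcard : ∀ i, {a | la a = some i}.ncard = {b | lb b = some i}.ncard)
    (hdegα : ∀ a, la a ≠ none → ρ * n ≤ leftDeg G a)
    (hdegβ : ∀ b, lb b ≠ none → ρ * n ≤ rightDeg G b)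
    (hG : {e | la e.1 ≠ none ∧ la e.1 = lb e.2 ∧ e ∉ G}.ncard ≤ (ρ * n) ^ 2 / 2)
    (hnone : ∃ M : {a // la a = none} ≃ {b // lb b = none}, ∀ a, (a.1, (M a).1) ∈ G)
    (hconf : ∀ q ∈ conflicts G χ, la q.1.1 ≠ none) :
    HasRainbowMatching G χ := by
  have hs : 0 ≤ ρ * n := by positivity
  refine hasRainbowMatching_of_switchings (c := ρ ^ 2 / 2) hα (by nlinarith) hμ₀ (by linarith)
    (by linarith) hχ (exists_isPerfectMatching_of_fibers la lb fun i => ?_)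
    fun M hM q hq => le_ncard_switchings_of_clusters hl hs hdegα hdegβ (by linarith) hM (hconf q hq)
  cases i with
  | none => exact hnone
  | some i => exact exists_equiv_fiber hl (hcard i) hs hdegα hdegβ (by nlinarith)

end Clusters

section PartialMatchings

variable {α β κ : Type*} {G H : Set (α × β)} {χ : α × β → κ} {m D : ℝ}

lemma leftDeg_eq_ncard_sep (G : Set (α × β)) (a : α) :
    leftDeg G a = {e ∈ G | e.1 = a}.ncard := by
  rw [leftDeg, ← Set.ncard_image_of_injective _ (Prod.mk_right_injective a)]
  congr 1
  ext ⟨x, b⟩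
  simp only [Set.mem_image, Set.mem_ofPred_eq, Prod.mk.injEq]
  grind

lemma rightDeg_eq_ncard_sep (G : Set (α × β)) (b : β) :
    rightDeg G b = {e ∈ G | e.2 = b}.ncard := by
  rw [← ncard_swap_preimage]
  exact leftDeg_eq_ncard_sep (Prod.swap ⁻¹' G) b

theorem exists_colors_abs_deg_sub_mul_deg_le [Finite α] [Finite β] {ι : Type*} [Fintype ι]
    (S : ι → Set (α × β)) (hm : 0 ≤ m) (hS : ∀ i, IsBoundedColoring (S i) χ m) {p : ℝ}
    (hp : p ∈ Set.Icc 0 1) :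
    ∃ T : Set κ, ∀ i,
      (∀ a, |leftDeg (S i ∩ χ ⁻¹' T) a - p * leftDeg (S i) a| ≤ 3 * Fintype.card ι * m) ∧
      (∀ b, |rightDeg (S i ∩ χ ⁻¹' T) b - p * rightDeg (S i) b| ≤ 3 * Fintype.card ι * m) ∧
      |(S i ∩ χ ⁻¹' T).ncard - p * (S i).ncard| ≤ 3 * Fintype.card ι * m := by
  have := Fintype.ofFinite α
  have := Fintype.ofFinite β
  let A : ι × (α ⊕ β ⊕ Unit) → Set (α × β) := fun q =>
    q.2.elim (fun a => {e ∈ S q.1 | e.1 = a})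
      (Sum.elim (fun b => {e ∈ S q.1 | e.2 = b}) fun _ => S q.1)
  obtain ⟨T, hT⟩ := exists_colors_abs_ncard_sub_mul_ncard_le A χ
    (Δ := 3 * Fintype.card ι * m) (by positivity) (fun c => by
      have hrow : ∀ i, ∑ r, {e ∈ A (i, r) | χ e = c}.ncard = 3 * {e ∈ S i | χ e = c}.ncard := by
        intro i
        have hα := sum_ncard_sep_apply_eq {e ∈ S i | χ e = c} Prod.fst univ
        have hβ := sum_ncard_sep_apply_eq {e ∈ S i | χ e = c} Prod.snd univ
        simp only [Set.mem_ofPred_eq, mem_univ, and_true, and_right_comm (b := χ _ = c)] at hα hβ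
        simp only [Fintype.sum_sum_type, A, Sum.elim_inl, Sum.elim_inr, Set.mem_ofPred_eq, hα, hβ,
          univ_unique, sum_singleton]
        lia
      rw [Fintype.sum_prod_type, sum_congr rfl fun i _ => hrow i, ← mul_sum]
      push_cast
      rw [mul_assoc, ← nsmul_eq_mul (Fintype.card ι)]
      gcongr
      exact sum_le_card_nsmul _ _ _ fun i _ => hS i c) hp
  have hsep : ∀ i, ∀ P : α × β → Prop,
      {e ∈ {e ∈ S i | P e} | χ e ∈ T} = {e ∈ S i ∩ χ ⁻¹' T | P e} := fun i P =>
    Set.ext fun e => and_right_comm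
  refine ⟨T, fun i => ⟨fun a => ?_, fun b => ?_, hT (i, .inr (.inr ()))⟩⟩
  · rw [leftDeg_eq_ncard_sep, leftDeg_eq_ncard_sep, ← hsep]
    exact hT (i, .inl a)
  · rw [rightDeg_eq_ncard_sep, rightDeg_eq_ncard_sep, ← hsep]
    exact hT (i, .inr (.inl b))

/-- The edges in `K` are pairwise disjoint and have distinct `χ`-colours. -/
def IsRainbowPartialMatching (χ : α × β → κ) (K : Set (α × β)) : Prop :=
  K.Pairwise fun e f => e.1 ≠ f.1 ∧ e.2 ≠ f.2 ∧ χ e ≠ χ f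

lemma IsRainbowPartialMatching.injOn_fst {K : Set (α × β)} (hK : IsRainbowPartialMatching χ K) :
    K.InjOn Prod.fst := fun _ he _ hf hef =>
  by_contra fun hne => (hK he hf hne).1 hef

lemma IsRainbowPartialMatching.injOn_snd {K : Set (α × β)} (hK : IsRainbowPartialMatching χ K) :
    K.InjOn Prod.snd := fun _ he _ hf hef =>
  by_contra fun hne => (hK he hf hne).2.1 hef

variable [Finite α] [Finite β]

lemma ncard_sep_clash_le (hα : ∀ a, leftDeg H a ≤ D) (hβ : ∀ b, rightDeg H b ≤ D)
    (hχ : IsBoundedColoring H χ m) (f : α × β) :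
    {e ∈ H | e.1 = f.1 ∨ e.2 = f.2 ∨ χ e = χ f}.ncard ≤ 2 * D + m := by
  have hcover : {e ∈ H | e.1 = f.1 ∨ e.2 = f.2 ∨ χ e = χ f} ⊆
      {e ∈ H | e.1 = f.1} ∪ {e ∈ H | e.2 = f.2} ∪ {e ∈ H | χ e = χ f} := by
    rintro e ⟨he, h | h | h⟩
    exacts [Or.inl (Or.inl ⟨he, h⟩), Or.inl (Or.inr ⟨he, h⟩), Or.inr ⟨he, h⟩]
  have hle := (Set.ncard_le_ncard hcover).trans <| (Set.ncard_union_le _ _).trans <|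
    Nat.add_le_add_right (Set.ncard_union_le _ _) _
  rw [← leftDeg_eq_ncard_sep, ← rightDeg_eq_ncard_sep] at hle
  have hle' := (Nat.cast_le (α := ℝ)).2 hle
  push_cast at hle'
  linarith [hα f.1, hβ f.2, hχ (χ f)]

theorem exists_isRainbowPartialMatching (hD : 0 ≤ D) (hm : 0 ≤ m) (hα : ∀ a, leftDeg H a ≤ D)
    (hβ : ∀ b, rightDeg H b ≤ D) (hχ : IsBoundedColoring H χ m) {d : ℕ}
    (hd : d * (2 * D + m) < H.ncard) :
    ∃ K ⊆ H, K.ncard = d ∧ IsRainbowPartialMatching χ K := by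
  induction d with
  | zero => exact ⟨∅, H.empty_subset, Set.ncard_empty _, Set.pairwise_empty _⟩
  | succ d ih =>
    push_cast at hd
    obtain ⟨K, hKH, hKd, hK⟩ := ih (by linarith)
    obtain ⟨e, he, hfree⟩ : ∃ e ∈ H, ∀ f ∈ K, e.1 ≠ f.1 ∧ e.2 ≠ f.2 ∧ χ e ≠ χ f := by
      by_contra! hcon
      let P : Set ((α × β) × (α × β)) :=
        {q | q.1 ∈ K ∧ q.2 ∈ H ∧ (q.2.1 = q.1.1 ∨ q.2.2 = q.1.2 ∨ χ q.2 = χ q.1)}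
      have hP : (P.ncard : ℝ) ≤ K.ncard * (2 * D + m) :=
        ncard_le_ncard_mul_of_leftDeg_le (fun q hq => hq.1) fun f _ =>
          (Nat.cast_le.2 (Set.ncard_le_ncard fun e he => he.2)).trans
            (ncard_sep_clash_le hα hβ hχ f)
      have hHP : H ⊆ Prod.snd '' P := fun e he => by
        obtain ⟨f, hf, hclash⟩ := hcon e he
        exact ⟨(f, e), ⟨hf, he, by tauto⟩, rfl⟩
      have hHP : (H.ncard : ℝ) ≤ P.ncard :=
        Nat.cast_le.2 ((Set.ncard_le_ncard hHP).trans (Set.ncard_image_le P.toFinite))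
      rw [hKd] at hP
      linarith
    refine ⟨insert e K, Set.insert_subset he hKH, ?_, hK.insert fun f hf _ => ⟨hfree f hf, ?_⟩⟩
    · rw [Set.ncard_insert_of_notMem fun heK => (hfree e heK).1 rfl, hKd]
    · exact ⟨(hfree f hf).1.symm, (hfree f hf).2.1.symm, (hfree f hf).2.2.symm⟩

end PartialMatchings

section NearSplits

variable {α β κ : Type*} {G : Set (α × β)} {χ : α × β → κ} {X : Set α} {Y : Set β} {n d : ℕ}

/-- The pairs joining `X` to the complement of `Y` or the complement of `X` to `Y`. -/
def across (X : Set α) (Y : Set β) : Set (α × β) := {e | e.1 ∈ X ↔ e.2 ∉ Y}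

lemma swap_preimage_across (X : Set α) (Y : Set β) :
    Prod.swap ⁻¹' across X Y = across Y X :=
  Set.ext fun _ => iff_not_comm

/-- Almost all pairs across `X` and `Y` are edges of `G`, every vertex has many edges across, and
`X` and `Y` exceed an exact split, `#X + #Y = n`, by `d` vertices in total. The constants are
balanced so that moving one vertex out of `X` or `Y` pays for decreasing `d` by one. -/
structure NearSplit (G : Set (α × β)) (n d : ℕ) (X : Set α) (Y : Set β) : Prop where
  ncard_add : X.ncard + Y.ncard = n + d
  le_leftDeg : ∀ a, (n : ℝ) / 100 + d ≤ leftDeg (G ∩ across X Y) a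
  le_rightDeg : ∀ b, (n : ℝ) / 100 + d ≤ rightDeg (G ∩ across X Y) b
  ncard_sdiff : ((across X Y \ G).ncard : ℝ) + d * n ≤ (n : ℝ) ^ 2 / 10 ^ 6
  le_left : n + 4 * d ≤ 4 * X.ncard
  le_right : n + 4 * d ≤ 4 * Y.ncard

lemma NearSplit.swap (h : NearSplit G n d X Y) : NearSplit (Prod.swap ⁻¹' G) n d Y X where
  ncard_add := by rw [add_comm, h.ncard_add]
  le_leftDeg b := by
    rw [← swap_preimage_across]
    exact h.le_rightDeg b
  le_rightDeg a := by
    rw [← swap_preimage_across]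
    exact h.le_leftDeg a
  ncard_sdiff := by
    rw [← swap_preimage_across, ← Set.preimage_sdiff, ncard_swap_preimage]
    exact h.ncard_sdiff
  le_left := h.le_right
  le_right := h.le_left

/-- The clusters of the reduced problem: vertices in `U` are unlabelled, every other vertex is
labelled by whether it lies in `W`. -/
noncomputable def cluster {γ : Type*} (U W : Set γ) (x : γ) : Option Prop :=
  open Classical in if x ∈ U then none else some (x ∈ W)

lemma cluster_eq_none {γ : Type*} {U W : Set γ} {x : γ} : cluster U W x = none ↔ x ∈ U := by
  simp [cluster]

lemma cluster_of_notMem {γ : Type*} {U W : Set γ} {x : γ} (hx : x ∉ U) :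
    cluster U W x = some (x ∈ W) :=
  if_neg hx

lemma setOf_cluster_eq_true {γ : Type*} (U W : Set γ) :
    {x | cluster U W x = some True} = W \ U := by
  ext x
  by_cases hx : x ∈ U <;> simp [cluster, hx]

lemma setOf_cluster_eq_false {γ : Type*} (U W : Set γ) :
    {x | cluster U W x = some False} = Wᶜ \ U := by
  ext x
  by_cases hx : x ∈ U <;> simp [cluster, hx]

lemma ncard_cluster_eq [Finite α] [Finite β] (hα : Nat.card α = n) (hβ : Nat.card β = n)
    (hXY : X.ncard + Y.ncard = n + d) {U : Set α} {V : Set β} (hUX : U ⊆ X) (hVY : V ⊆ Y)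
    (hU : U.ncard = d) (hV : V.ncard = d) (i : Prop) :
    {a | cluster U X a = some i}.ncard = {b | cluster V Yᶜ b = some i}.ncard := by
  have hXc := Set.ncard_add_ncard_compl X
  have hYc := Set.ncard_add_ncard_compl Y
  have hXU := Set.ncard_sdiff_add_ncard_of_subset hUX
  have hYV := Set.ncard_sdiff_add_ncard_of_subset hVY
  rcases Classical.propComplete i with rfl | rfl
  · rw [setOf_cluster_eq_true, setOf_cluster_eq_true,
      (Set.disjoint_compl_left_iff_subset.2 hVY).sdiff_eq_left]
    lia
  · rw [setOf_cluster_eq_false, setOf_cluster_eq_false, compl_compl,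
      (Set.disjoint_compl_left_iff_subset.2 hUX).sdiff_eq_left]
    lia

/-- The graph left after committing to the edges of `K`: besides `K` it keeps only the edges across
`X` and `Y` that avoid the vertices of `K` and all colours in `T`. -/
def committed (G : Set (α × β)) (χ : α × β → κ) (X : Set α) (Y : Set β) (K : Set (α × β))
    (T : Set κ) : Set (α × β) :=
  K ∪ {e ∈ G ∩ across X Y | e.1 ∉ Prod.fst '' K ∧ e.2 ∉ Prod.snd '' K ∧ χ e ∉ T}

section Committed

variable {K : Set (α × β)} {T : Set κ}

lemma committed_subset (hKG : K ⊆ G) : committed G χ X Y K T ⊆ G :=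
  Set.union_subset hKG fun _ he => he.1.1

lemma cluster_eq_of_mem_committed {e : α × β} (he : e ∈ committed G χ X Y K T) :
    cluster (Prod.fst '' K) X e.1 = cluster (Prod.snd '' K) Yᶜ e.2 := by
  rcases he with he | ⟨⟨_, he⟩, h₁, h₂, _⟩
  · rw [cluster_eq_none.2 (Set.mem_image_of_mem _ he),
      cluster_eq_none.2 (Set.mem_image_of_mem _ he)]
  · rw [cluster_of_notMem h₁, cluster_of_notMem h₂]
    exact congrArg some (propext he)

lemma mem_of_mem_committed {e : α × β} (he : e ∈ committed G χ X Y K T)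
    (h : e.1 ∈ Prod.fst '' K) : e ∈ K :=
  he.resolve_right fun he => he.2.1 h

lemma exists_equiv_committed (hK : IsRainbowPartialMatching χ K) :
    ∃ M : {a // cluster (Prod.fst '' K) X a = none} ≃ {b // cluster (Prod.snd '' K) Yᶜ b = none},
      ∀ a, (a.1, (M a).1) ∈ committed G χ X Y K T := by
  let f := Equiv.Set.imageOfInjOn Prod.fst K hK.injOn_fst
  let g := Equiv.Set.imageOfInjOn Prod.snd K hK.injOn_snd
  refine ⟨(Equiv.subtypeEquivRight fun _ => cluster_eq_none).trans <|
    (f.symm.trans g).trans (Equiv.subtypeEquivRight fun _ => cluster_eq_none).symm, fun a => ?_⟩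
  obtain ⟨e, he⟩ := f.surjective ⟨a, cluster_eq_none.1 a.2⟩
  have hea : e.1.1 = a := congrArg Subtype.val he
  have hge : ((g (f.symm ⟨a, cluster_eq_none.1 a.2⟩)).1 : β) = e.1.2 := by
    rw [← he, f.symm_apply_apply]
    rfl
  refine Or.inl ?_
  change (a.1, (g (f.symm ⟨a, cluster_eq_none.1 a.2⟩)).1) ∈ K
  rw [hge, ← hea]
  exact e.2

lemma IsRainbowPartialMatching.notMem_of_mem_conflicts (hK : IsRainbowPartialMatching χ K)
    (hT : K ⊆ χ ⁻¹' T) {q : (α × β) × (α × β)}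
    (hq : q ∈ conflicts (committed G χ X Y K T) χ) : q.1.1 ∉ Prod.fst '' K := by
  obtain ⟨h₁, h₂, hcolor, hne, _⟩ := hq
  intro hmem
  have hqK := mem_of_mem_committed h₁ hmem
  rcases h₂ with hqK' | ⟨_, _, _, hqT⟩
  · exact (hK hqK hqK' fun h => hne (congrArg Prod.fst h)).2.2 hcolor
  · exact hqT (hcolor ▸ hT hqK)

lemma leftDeg_le_of_forall_or [Finite β] {F R : Set (α × β)} {V : Set β} {a : α}
    (h : ∀ b, (a, b) ∈ G → (a, b) ∈ F ∨ (a, b) ∈ R ∨ b ∈ V) :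
    (leftDeg G a : ℝ) ≤ leftDeg F a + (leftDeg R a + V.ncard) := by
  have hsub : {b | (a, b) ∈ G} ⊆ {b | (a, b) ∈ F} ∪ ({b | (a, b) ∈ R} ∪ V) := h
  exact_mod_cast (Set.ncard_le_ncard hsub).trans <| (Set.ncard_union_le _ _).trans <|
    Nat.add_le_add_left (Set.ncard_union_le _ _) _

lemma rightDeg_le_of_forall_or [Finite α] {F R : Set (α × β)} {U : Set α} {b : β}
    (h : ∀ a, (a, b) ∈ G → (a, b) ∈ F ∨ (a, b) ∈ R ∨ a ∈ U) :
    (rightDeg G b : ℝ) ≤ rightDeg F b + (rightDeg R b + U.ncard) :=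
  leftDeg_le_of_forall_or (G := Prod.swap ⁻¹' G) (F := Prod.swap ⁻¹' F) (R := Prod.swap ⁻¹' R) h

lemma setOf_cluster_notMem_committed_subset :
    {e | cluster (Prod.fst '' K) X e.1 ≠ none ∧
      cluster (Prod.fst '' K) X e.1 = cluster (Prod.snd '' K) Yᶜ e.2 ∧
      e ∉ committed G χ X Y K T} ⊆ across X Y \ G ∪ (G ∩ across X Y) ∩ χ ⁻¹' T := by
  rintro e ⟨h₁, h₂, hF⟩
  have hU := mt cluster_eq_none.2 h₁
  have hV := mt cluster_eq_none.2 (h₂ ▸ h₁)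
  rw [cluster_of_notMem hU, cluster_of_notMem hV, Option.some_inj] at h₂
  have hacross : e ∈ across X Y := Iff.of_eq h₂
  by_cases hG : e ∈ G
  · exact Or.inr ⟨⟨hG, hacross⟩, by_contra fun hT => hF (Or.inr ⟨⟨hG, hacross⟩, hU, hV, hT⟩)⟩
  · exact Or.inl ⟨hacross, hG⟩

theorem NearSplit.hasRainbowMatching_of_partialMatching [Finite α] [Finite β]
    (h : NearSplit G n d X Y) (hα : Nat.card α = n) (hβ : Nat.card β = n) (hn : 10 ^ 10 ≤ n)
    (hχ : IsBoundedColoring G χ (1 / 10 ^ 19 * n)) (hKG : K ⊆ G ∩ X ×ˢ Y) (hKd : K.ncard = d)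
    (hK : IsRainbowPartialMatching χ K) (hKT : K ⊆ χ ⁻¹' T)
    (hTα : ∀ a, (leftDeg ((G ∩ across X Y) ∩ χ ⁻¹' T) a : ℝ) ≤ 2 / 10 ^ 6 * n)
    (hTβ : ∀ b, (rightDeg ((G ∩ across X Y) ∩ χ ⁻¹' T) b : ℝ) ≤ 2 / 10 ^ 6 * n) :
    HasRainbowMatching G χ := by
  have hn' : (10 ^ 10 : ℝ) ≤ n := mod_cast hn
  have hFG : committed G χ X Y K T ⊆ G := committed_subset (hKG.trans Set.inter_subset_left)
  have hU : (Prod.fst '' K).ncard = d := hKd ▸ hK.injOn_fst.ncard_image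
  have hV : (Prod.snd '' K).ncard = d := hKd ▸ hK.injOn_snd.ncard_image
  refine HasRainbowMatching.mono ?_ hFG
  refine hasRainbowMatching_of_clusters (ρ := 1 / 200) (μ := 1 / 10 ^ 19) hα (by norm_num)
    (by norm_num) (by norm_num) (by norm_num) (by linarith) (hχ.mono hFG)
    (fun e he => cluster_eq_of_mem_committed he)
    (ncard_cluster_eq hα hβ h.ncard_add (Set.image_subset_iff.2 fun e he => (hKG he).2.1)
      (Set.image_subset_iff.2 fun e he => (hKG he).2.2) hU hV)
    (fun a ha => ?_) (fun b hb => ?_) ?_ (exists_equiv_committed hK)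
    fun q hq => mt cluster_eq_none.1 (hK.notMem_of_mem_conflicts hKT hq)
  · have := leftDeg_le_of_forall_or (G := G ∩ across X Y) (F := committed G χ X Y K T)
      (R := (G ∩ across X Y) ∩ χ ⁻¹' T) (V := Prod.snd '' K) (a := a) fun b hb => by
        have := mt cluster_eq_none.2 ha
        simp only [committed, Set.mem_union, Set.mem_ofPred_eq]
        tauto
    rw [hV] at this
    linarith [h.le_leftDeg a, hTα a]
  · have := rightDeg_le_of_forall_or (G := G ∩ across X Y) (F := committed G χ X Y K T)
      (R := (G ∩ across X Y) ∩ χ ⁻¹' T) (U := Prod.fst '' K) (b := b) fun a ha => by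
        have := mt cluster_eq_none.2 hb
        simp only [committed, Set.mem_union, Set.mem_ofPred_eq]
        tauto
    rw [hU] at this
    linarith [h.le_rightDeg b, hTβ b]
  · have hle := (Nat.cast_le (α := ℝ)).2 <| (Set.ncard_le_ncard
      (setOf_cluster_notMem_committed_subset (G := G) (χ := χ) (X := X) (Y := Y) (K := K)
        (T := T))).trans (Set.ncard_union_le _ _)
    have hT := ncard_le_of_leftDeg_le hTα
    rw [hα] at hT
    push_cast at hle
    nlinarith [h.ncard_sdiff, mul_nonneg (Nat.cast_nonneg (α := ℝ) d) (Nat.cast_nonneg (α := ℝ) n)]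

end Committed

end NearSplits

section Moving

variable {α β κ : Type*} {G : Set (α × β)} {χ : α × β → κ} {X : Set α} {Y : Set β} {n d : ℕ}

lemma swap_preimage_inter_prod (G : Set (α × β)) (X : Set α) (Y : Set β) :
    Prod.swap ⁻¹' (G ∩ X ×ˢ Y) = Prod.swap ⁻¹' G ∩ Y ×ˢ X := by
  rw [Set.preimage_inter, Set.preimage_swap_prod]

lemma leftDeg_le_card_right [Finite β] (G : Set (α × β)) (a : α) : leftDeg G a ≤ Nat.card β :=
  Set.ncard_univ β ▸ Set.ncard_le_ncard (Set.subset_univ _)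

lemma rightDeg_le_card_left [Finite α] (G : Set (α × β)) (b : β) : rightDeg G b ≤ Nat.card α :=
  leftDeg_le_card_right (Prod.swap ⁻¹' G) b

lemma leftDeg_inter_across_le_erase [Finite β] {a x : α} (hx : x ≠ a) :
    leftDeg (G ∩ across X Y) x ≤ leftDeg (G ∩ across (X \ {a}) Y) x :=
  leftDeg_le_leftDeg fun b hb => ⟨hb.1, by simpa [across, hx] using hb.2⟩

lemma leftDeg_inter_prod_le_leftDeg_inter_across_erase [Finite β] (a : α) :
    leftDeg (G ∩ X ×ˢ Y) a ≤ leftDeg (G ∩ across (X \ {a}) Y) a :=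
  leftDeg_le_leftDeg fun b hb => ⟨hb.1, by simp [across, hb.2.2]⟩

lemma rightDeg_inter_across_le_erase_add_one [Finite α] (a : α) (b : β) :
    rightDeg (G ∩ across X Y) b ≤ rightDeg (G ∩ across (X \ {a}) Y) b + 1 := by
  have hsub : {x | (x, b) ∈ G ∩ across X Y} ⊆ insert a {x | (x, b) ∈ G ∩ across (X \ {a}) Y} := by
    intro x hx
    by_cases hxa : x = a
    · exact Or.inl hxa
    · exact Or.inr ⟨hx.1, by simpa [across, hxa] using hx.2⟩
  exact (Set.ncard_le_ncard hsub).trans (Set.ncard_insert_le _ _)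

variable [Finite α] [Finite β]

lemma ncard_across_erase_sdiff_le (hβ : Nat.card β = n) (a : α) :
    (across (X \ {a}) Y \ G).ncard ≤ (across X Y \ G).ncard + n := by
  have hsub : across (X \ {a}) Y \ G ⊆ (across X Y \ G) ∪ {a} ×ˢ Set.univ := by
    intro e he
    by_cases hea : e.1 = a
    · exact Or.inr ⟨hea, trivial⟩
    · exact Or.inl ⟨by simpa [across, hea] using he.1, he.2⟩
  have hle := (Set.ncard_le_ncard hsub).trans (Set.ncard_union_le _ _)
  rwa [Set.ncard_prod, Set.ncard_singleton, Set.ncard_univ, hβ, one_mul] at hle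

lemma IsDirac.ncard_mul_le_ncard_inter_prod (hG : IsDirac G n) (X : Set α) (Y : Set β) :
    X.ncard * (Y.ncard - n / 2 : ℝ) ≤ (G ∩ X ×ˢ Y).ncard :=
  ncard_mul_le_of_le_leftDeg fun a ha => by
    have hdeg : (n : ℝ) ≤ 2 * leftDeg G a := mod_cast hG.le_leftDeg a
    have hinter := leftDeg_add_ncard_le_leftDeg_inter_add (G := G) Y ha
    rw [hG.card_right] at hinter
    have hinter : (leftDeg G a + Y.ncard : ℝ) ≤ leftDeg (G ∩ X ×ˢ Y) a + n := mod_cast hinter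
    linarith

lemma NearSplit.mul_div_le_ncard_inter_prod (h : NearSplit G n d X Y) (hG : IsDirac G n) :
    (d * n : ℝ) / 8 ≤ (G ∩ X ×ˢ Y).ncard := by
  have hX := hG.ncard_mul_le_ncard_inter_prod X Y
  have hY := hG.swap.ncard_mul_le_ncard_inter_prod Y X
  rw [← swap_preimage_inter_prod, ncard_swap_preimage] at hY
  have hadd : (X.ncard + Y.ncard : ℝ) = n + d := mod_cast h.ncard_add
  have hXn : (n : ℝ) ≤ 4 * X.ncard := mod_cast (Nat.le_add_right _ _).trans h.le_left
  have hYn : (n : ℝ) ≤ 4 * Y.ncard := mod_cast (Nat.le_add_right _ _).trans h.le_right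
  rcases le_total X.ncard Y.ncard with hle | hle
  · have hle : (X.ncard : ℝ) ≤ Y.ncard := mod_cast hle
    nlinarith [Nat.cast_nonneg (α := ℝ) d]
  · have hle : (Y.ncard : ℝ) ≤ X.ncard := mod_cast hle
    nlinarith [Nat.cast_nonneg (α := ℝ) d]

theorem NearSplit.hasRainbowMatching_of_crossing_deg_le (h : NearSplit G n d X Y)
    (hG : IsDirac G n) (hn : 10 ^ 10 ≤ n) (hχ : IsBoundedColoring G χ (1 / 10 ^ 19 * n))
    (hd : 0 < d) (hα : ∀ a, (leftDeg (G ∩ X ×ˢ Y) a : ℝ) ≤ n / 50)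
    (hβ : ∀ b, (rightDeg (G ∩ X ×ˢ Y) b : ℝ) ≤ n / 50) : HasRainbowMatching G χ := by
  have hn' : (10 ^ 10 : ℝ) ≤ n := mod_cast hn
  obtain ⟨T, hT⟩ := exists_colors_abs_deg_sub_mul_deg_le ![G ∩ X ×ˢ Y, G ∩ across X Y] (χ := χ)
    (m := 1 / 10 ^ 19 * n) (p := 1 / 10 ^ 6) (by positivity)
    (Fin.forall_fin_two.2 ⟨hχ.mono Set.inter_subset_left, hχ.mono Set.inter_subset_left⟩)
    (by norm_num)
  obtain ⟨⟨hcα, hcβ, hc⟩, haα, haβ, _⟩ := Fin.forall_fin_two.1 hT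
  simp only [Matrix.cons_val_zero, Matrix.cons_val_one, Fintype.card_fin] at hcα hcβ hc haα haβ
  obtain ⟨K, hKH, hKd, hK⟩ := exists_isRainbowPartialMatching (H := G ∩ X ×ˢ Y ∩ χ ⁻¹' T)
    (D := 3 / 10 ^ 8 * n) (m := 1 / 10 ^ 19 * n) (d := d) (by positivity) (by positivity)
    (fun a => by linarith [abs_le.1 (hcα a), hα a]) (fun b => by linarith [abs_le.1 (hcβ b), hβ b])
    (hχ.mono (Set.inter_subset_left.trans Set.inter_subset_left)) (by
        have hdn : (n : ℝ) ≤ d * n := le_mul_of_one_le_left (by positivity) (mod_cast hd)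
        linarith [(abs_le.1 hc).1, h.mul_div_le_ncard_inter_prod hG])
  refine h.hasRainbowMatching_of_partialMatching hG.card_left hG.card_right hn hχ
    (hKH.trans Set.inter_subset_left) hKd hK (hKH.trans Set.inter_subset_right)
    (fun a => ?_) fun b => ?_
  · have hdeg : (leftDeg (G ∩ across X Y) a : ℝ) ≤ n :=
      mod_cast hG.card_right ▸ leftDeg_le_card_right _ a
    linarith [(abs_le.1 (haα a)).2]
  · have hdeg : (rightDeg (G ∩ across X Y) b : ℝ) ≤ n :=
      mod_cast hG.card_left ▸ rightDeg_le_card_left _ b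
    linarith [(abs_le.1 (haβ b)).2]

lemma NearSplit.erase_left (h : NearSplit G n (d + 1) X Y) (hβ : Nat.card β = n) {a : α}
    (ha : a ∈ X) (hdeg : (n : ℝ) / 100 + d ≤ leftDeg (G ∩ X ×ˢ Y) a) :
    NearSplit G n d (X \ {a}) Y where
  ncard_add := by
    have := Set.ncard_sdiff_singleton_add_one ha
    have := h.ncard_add
    lia
  le_leftDeg x := by
    rcases eq_or_ne x a with rfl | hx
    · exact hdeg.trans (Nat.cast_le.2 (leftDeg_inter_prod_le_leftDeg_inter_across_erase x))
    · refine le_trans ?_ ((h.le_leftDeg x).trans (Nat.cast_le.2 (leftDeg_inter_across_le_erase hx)))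
      push_cast
      linarith
  le_rightDeg b := by
    have hle := (Nat.cast_le (α := ℝ)).2
      (rightDeg_inter_across_le_erase_add_one (G := G) (X := X) (Y := Y) a b)
    have := h.le_rightDeg b
    push_cast at hle this
    linarith
  ncard_sdiff := by
    have hle := (Nat.cast_le (α := ℝ)).2
      (ncard_across_erase_sdiff_le (G := G) (X := X) (Y := Y) hβ a)
    have := h.ncard_sdiff
    push_cast at hle this
    linarith
  le_left := by
    have := Set.ncard_sdiff_singleton_add_one ha
    have := h.le_left
    lia
  le_right := by
    have := h.le_right
    lia

theorem NearSplit.hasRainbowMatching (h : NearSplit G n d X Y) (hG : IsDirac G n)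
    (hn : 10 ^ 10 ≤ n) (hχ : IsBoundedColoring G χ (1 / 10 ^ 19 * n)) :
    HasRainbowMatching G χ := by
  induction d generalizing X Y with
  | zero =>
    refine h.hasRainbowMatching_of_partialMatching (K := ∅) (T := ∅) hG.card_left hG.card_right
      hn hχ (Set.empty_subset _) (Set.ncard_empty _) (Set.pairwise_empty _) (Set.empty_subset _)
      (fun a => ?_) fun b => ?_
    · simp [leftDeg]
    · simp [rightDeg]
  | succ d ih =>
    by_cases hleft : ∃ a ∈ X, (n : ℝ) / 100 + d ≤ leftDeg (G ∩ X ×ˢ Y) a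
    · obtain ⟨a, ha, hdeg⟩ := hleft
      exact ih (h.erase_left hG.card_right ha hdeg)
    by_cases hright : ∃ b ∈ Y, (n : ℝ) / 100 + d ≤ rightDeg (G ∩ X ×ˢ Y) b
    · obtain ⟨b, hb, hdeg⟩ := hright
      exact ih (h.swap.erase_left hG.card_left hb (by rwa [← swap_preimage_inter_prod])).swap
    push Not at hleft hright
    have hd : ((d : ℝ) + 1) * n ≤ n ^ 2 / 10 ^ 6 := by
      have := h.ncard_sdiff
      push_cast at this
      linarith [Nat.cast_nonneg (α := ℝ) (across X Y \ G).ncard]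
    have hn' : (10 ^ 10 : ℝ) ≤ n := mod_cast hn
    have hd' : (d : ℝ) + 1 ≤ n / 10 ^ 6 := by nlinarith
    refine h.hasRainbowMatching_of_crossing_deg_le hG hn hχ d.succ_pos (fun a => ?_) fun b => ?_
    · by_cases ha : a ∈ X
      · linarith [hleft a ha]
      · have hzero : leftDeg (G ∩ X ×ˢ Y) a = 0 := by simp [leftDeg, ha]
        rw [hzero, Nat.cast_zero]
        positivity
    · by_cases hb : b ∈ Y
      · linarith [hright b hb]
      · have hzero : rightDeg (G ∩ X ×ˢ Y) b = 0 := by simp [rightDeg, hb]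
        rw [hzero, Nat.cast_zero]
        positivity

end Moving

section Extremal

variable {α β κ : Type*} {G : Set (α × β)} {χ : α × β → κ} {X X' : Set α} {Y Y' : Set β} {n : ℕ}
  {η : ℝ}

lemma ncard_compl_eq_sub [Finite α] (hα : Nat.card α = n) (X : Set α) :
    (Xᶜ.ncard : ℝ) = n - X.ncard := by
  rw [← hα, ← Set.ncard_add_ncard_compl X]
  push_cast
  ring

lemma across_compl (X : Set α) (Y : Set β) : across Xᶜ Yᶜ = across X Y :=
  Set.ext fun _ => not_iff_not

lemma exists_nearSplit_of_le_deg [Finite α] [Finite β] (hα : Nat.card α = n) (hβ : Nat.card β = n)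
    (hX : |(X.ncard : ℝ) - n / 2| ≤ 6 / 10 ^ 8 * n) (hY : |(Y.ncard : ℝ) - n / 2| ≤ 6 / 10 ^ 8 * n)
    (hdegα : ∀ a, (n : ℝ) / 5 ≤ leftDeg (G ∩ across X Y) a)
    (hdegβ : ∀ b, (n : ℝ) / 5 ≤ rightDeg (G ∩ across X Y) b)
    (hG : ((across X Y \ G).ncard : ℝ) ≤ 18 / 10 ^ 8 * n ^ 2) :
    ∃ d X Y, NearSplit G n d X Y := by
  wlog hle : n ≤ X.ncard + Y.ncard generalizing X Y
  · have hXc := ncard_compl_eq_sub hα X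
    have hYc := ncard_compl_eq_sub hβ Y
    have hlt : (X.ncard + Y.ncard : ℝ) < n := mod_cast not_le.1 hle
    rw [← across_compl] at hdegα hdegβ hG
    refine this (X := Xᶜ) (Y := Yᶜ) ?_ ?_ hdegα hdegβ hG ?_
    · rwa [hXc, ← abs_neg, neg_sub, sub_sub_eq_add_sub, add_comm, ← sub_sub_eq_add_sub, sub_half]
    · rwa [hYc, ← abs_neg, neg_sub, sub_sub_eq_add_sub, add_comm, ← sub_sub_eq_add_sub, sub_half]
    · have : (n : ℝ) ≤ Xᶜ.ncard + Yᶜ.ncard := by linarith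
      exact_mod_cast this
  obtain ⟨d, hd⟩ := Nat.exists_eq_add_of_le hle
  have hd' : (X.ncard + Y.ncard : ℝ) = n + d := mod_cast hd
  rw [abs_le] at hX hY
  refine ⟨d, X, Y, hd, fun a => ?_, fun b => ?_, ?_, ?_, ?_⟩
  · linarith [hdegα a]
  · linarith [hdegβ b]
  · nlinarith [Nat.cast_nonneg (α := ℝ) n]
  · have : (n + 4 * d : ℝ) ≤ 4 * X.ncard := by linarith
    exact_mod_cast this
  · have : (n + 4 * d : ℝ) ≤ 4 * Y.ncard := by linarith
    exact_mod_cast this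

/-- `X` and `Y` contain at least half of their parts, but `G` has at most `η n²` edges between
them: the obstruction to the dense case. -/
structure SparsePair (G : Set (α × β)) (n : ℕ) (η : ℝ) (X : Set α) (Y : Set β) : Prop where
  le_left : n ≤ 2 * X.ncard
  le_right : n ≤ 2 * Y.ncard
  ncard_inter : ((G ∩ X ×ˢ Y).ncard : ℝ) ≤ η * n ^ 2

lemma SparsePair.swap (h : SparsePair G n η X Y) : SparsePair (Prod.swap ⁻¹' G) n η Y X where
  le_left := h.le_right
  le_right := h.le_left
  ncard_inter := by
    rw [← swap_preimage_inter_prod, ncard_swap_preimage]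
    exact h.ncard_inter

/-- The vertices with fewer than `n / 4` neighbours in `Y`. For a sparse pair `X`, `Y` this corrects
`X` on few vertices so that every vertex gets many neighbours across. -/
def fewNeighbors (G : Set (α × β)) (n : ℕ) (Y : Set β) : Set α :=
  {a | (leftDeg (G ∩ Prod.snd ⁻¹' Y) a : ℝ) < n / 4}

lemma IsDirac.le_leftDeg_inter_across [Finite β] (hG : IsDirac G n)
    {k : ℝ} (h₁ : ((Y' \ Y).ncard : ℝ) ≤ k) (h₂ : ((Y \ Y').ncard : ℝ) ≤ k) (a : α) :
    (n : ℝ) / 4 - k ≤ leftDeg (G ∩ across (fewNeighbors G n Y) Y') a := by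
  by_cases ha : a ∈ fewNeighbors G n Y
  · have hle := leftDeg_le_of_forall_or (G := G) (F := G ∩ across (fewNeighbors G n Y) Y')
      (R := G ∩ Prod.snd ⁻¹' Y) (V := Y' \ Y) (a := a) fun b hb => by
        by_cases hbY' : b ∈ Y'
        · by_cases hbY : b ∈ Y
          · exact Or.inr (Or.inl ⟨hb, hbY⟩)
          · exact Or.inr (Or.inr ⟨hbY', hbY⟩)
        · exact Or.inl ⟨hb, iff_of_true ha hbY'⟩
    have hdeg : (n : ℝ) ≤ 2 * leftDeg G a := mod_cast hG.le_leftDeg a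
    have hfew : (leftDeg (G ∩ Prod.snd ⁻¹' Y) a : ℝ) < n / 4 := ha
    linarith
  · have hle := leftDeg_le_of_forall_or (G := G ∩ Prod.snd ⁻¹' Y)
      (F := G ∩ across (fewNeighbors G n Y) Y') (R := ∅) (V := Y \ Y') (a := a) fun b hb => by
        by_cases hbY' : b ∈ Y'
        · exact Or.inl ⟨hb.1, iff_of_false ha (not_not_intro hbY')⟩
        · exact Or.inr (Or.inr ⟨hb.2, hbY'⟩)
    have hzero : leftDeg (∅ : Set (α × β)) a = 0 := Set.ncard_empty _
    rw [hzero, Nat.cast_zero] at hle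
    have hmany : (n : ℝ) / 4 ≤ leftDeg (G ∩ Prod.snd ⁻¹' Y) a := not_lt.1 ha
    linarith

lemma IsDirac.le_rightDeg_inter_across [Finite α] (hG : IsDirac G n) {k : ℝ}
    (h₁ : ((X' \ X).ncard : ℝ) ≤ k) (h₂ : ((X \ X').ncard : ℝ) ≤ k) (b : β) :
    (n : ℝ) / 4 - k ≤ rightDeg (G ∩ across X' (fewNeighbors (Prod.swap ⁻¹' G) n X)) b := by
  have hle := hG.swap.le_leftDeg_inter_across h₁ h₂ b
  rwa [← swap_preimage_across, ← Set.preimage_inter] at hle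

variable [Finite α] [Finite β]

lemma SparsePair.ncard_right_le (h : SparsePair G n η X Y) (hG : IsDirac G n) (hn : 0 < n) :
    (Y.ncard : ℝ) ≤ n / 2 + 2 * η * n := by
  have hX : (n : ℝ) ≤ 2 * X.ncard := mod_cast h.le_left
  have hY : (n : ℝ) ≤ 2 * Y.ncard := mod_cast h.le_right
  have hn : (0 : ℝ) < n := mod_cast hn
  have hedges := (hG.ncard_mul_le_ncard_inter_prod X Y).trans h.ncard_inter
  have hmul : n * (Y.ncard - n / 2 : ℝ) ≤ n * (2 * η * n) := by nlinarith
  linarith [le_of_mul_le_mul_left hmul hn]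

lemma SparsePair.ncard_prod_compl_sdiff_le (h : SparsePair G n η X Y) (hG : IsDirac G n) :
    ((X ×ˢ Yᶜ \ G).ncard : ℝ) ≤ η * n ^ 2 := by
  have hdeg := hG.ncard_mul_le_ncard_inter_prod X Set.univ
  have hsplit : (G ∩ X ×ˢ Set.univ).ncard ≤ (G ∩ X ×ˢ Y).ncard + (X ×ˢ Yᶜ ∩ G).ncard := by
    refine (Set.ncard_le_ncard fun e he => ?_).trans (Set.ncard_union_le _ _)
    by_cases hY : e.2 ∈ Y
    · exact Or.inl ⟨he.1, he.2.1, hY⟩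
    · exact Or.inr ⟨⟨he.2.1, hY⟩, he.1⟩
  have hprod := Set.ncard_inter_add_ncard_sdiff_eq_ncard (X ×ˢ Yᶜ) G
  rw [Set.ncard_prod] at hprod
  rw [Set.ncard_univ, hG.card_right] at hdeg
  have hprod : ((X ×ˢ Yᶜ ∩ G).ncard + (X ×ˢ Yᶜ \ G).ncard : ℝ) = X.ncard * Yᶜ.ncard :=
    mod_cast hprod
  rw [ncard_compl_eq_sub hG.card_right] at hprod
  have hsplit : ((G ∩ X ×ˢ Set.univ).ncard : ℝ) ≤ (G ∩ X ×ˢ Y).ncard + (X ×ˢ Yᶜ ∩ G).ncard :=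
    mod_cast hsplit
  have hY : (n : ℝ) ≤ 2 * Y.ncard := mod_cast h.le_right
  nlinarith [h.ncard_inter, Nat.cast_nonneg (α := ℝ) X.ncard]

lemma SparsePair.ncard_compl_prod_sdiff_le (h : SparsePair G n η X Y) (hG : IsDirac G n) :
    ((Xᶜ ×ˢ Y \ G).ncard : ℝ) ≤ η * n ^ 2 := by
  rw [← ncard_swap_preimage, Set.preimage_sdiff, Set.preimage_swap_prod]
  exact h.swap.ncard_prod_compl_sdiff_le hG.swap

lemma ncard_le_of_div_four_le_leftDeg {F : Set (α × β)} {S : Set α} (hn : 0 < n)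
    (hF : (F.ncard : ℝ) ≤ η * n ^ 2) (hS : ∀ a ∈ S, (n : ℝ) / 4 ≤ leftDeg F a) :
    (S.ncard : ℝ) ≤ 4 * η * n := by
  have hn : (0 : ℝ) < n := mod_cast hn
  have hmul : n * (S.ncard : ℝ) ≤ n * (4 * η * n) := by
    linarith [ncard_mul_le_of_le_leftDeg hS]
  exact le_of_mul_le_mul_left hmul hn

lemma SparsePair.ncard_sdiff_fewNeighbors_le (h : SparsePair G n η X Y) (hn : 0 < n) :
    ((X \ fewNeighbors G n Y).ncard : ℝ) ≤ 4 * η * n :=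
  ncard_le_of_div_four_le_leftDeg hn h.ncard_inter fun _ ha => (not_lt.1 ha.2).trans <|
    Nat.cast_le.2 <| leftDeg_le_leftDeg fun _ hb => ⟨hb.1, ha.1, hb.2⟩

lemma SparsePair.ncard_fewNeighbors_sdiff_le (h : SparsePair G n η X Y) (hG : IsDirac G n)
    (hn : 0 < n) : ((fewNeighbors G n Y \ X).ncard : ℝ) ≤ 4 * η * n := by
  refine ncard_le_of_div_four_le_leftDeg hn (h.ncard_compl_prod_sdiff_le hG) fun a ha => ?_
  have hsub : Y ⊆ {b | (a, b) ∈ Xᶜ ×ˢ Y \ G} ∪ {b | (a, b) ∈ G ∩ Prod.snd ⁻¹' Y} := by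
    intro b hb
    by_cases hab : (a, b) ∈ G
    · exact Or.inr ⟨hab, hb⟩
    · exact Or.inl ⟨⟨ha.2, hb⟩, hab⟩
  have hle : (Y.ncard : ℝ) ≤ leftDeg (Xᶜ ×ˢ Y \ G) a + leftDeg (G ∩ Prod.snd ⁻¹' Y) a :=
    mod_cast (Set.ncard_le_ncard hsub).trans (Set.ncard_union_le _ _)
  have hY : (n : ℝ) ≤ 2 * Y.ncard := mod_cast h.le_right
  have hfew : (leftDeg (G ∩ Prod.snd ⁻¹' Y) a : ℝ) < n / 4 := ha.1
  linarith

lemma ncard_across_sdiff_le (hα : Nat.card α = n) (hβ : Nat.card β = n) (G : Set (α × β))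
    (X X' : Set α) (Y Y' : Set β) :
    (across X' Y' \ G).ncard ≤ (X ×ˢ Yᶜ \ G).ncard + (Xᶜ ×ˢ Y \ G).ncard +
      ((X' \ X).ncard + (X \ X').ncard + ((Y' \ Y).ncard + (Y \ Y').ncard)) * n := by
  have hsub : across X' Y' \ G ⊆ (X ×ˢ Yᶜ \ G ∪ Xᶜ ×ˢ Y \ G) ∪
      ((X' \ X ∪ X \ X') ×ˢ Set.univ ∪ Set.univ ×ˢ (Y' \ Y ∪ Y \ Y')) := by
    rintro ⟨a, b⟩ ⟨hab, hG⟩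
    simp only [across, Set.mem_ofPred_eq] at hab
    simp only [Set.mem_union, Set.mem_sdiff, Set.mem_prod, Set.mem_compl_iff, Set.mem_univ]
    tauto
  refine (Set.ncard_le_ncard hsub).trans <| (Set.ncard_union_le _ _).trans <|
    add_le_add (Set.ncard_union_le _ _) <| (Set.ncard_union_le _ _).trans ?_
  rw [Set.ncard_prod, Set.ncard_prod, Set.ncard_univ, Set.ncard_univ, hα, hβ, mul_comm n, add_mul]
  gcongr <;> exact Set.ncard_union_le _ _

lemma abs_ncard_sub_half_le {k : ℝ} (hX : (n : ℝ) ≤ 2 * X.ncard)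
    (hX' : (X.ncard : ℝ) ≤ n / 2 + k) (h₁ : ((X' \ X).ncard : ℝ) ≤ 2 * k)
    (h₂ : ((X \ X').ncard : ℝ) ≤ 2 * k) : |(X'.ncard : ℝ) - n / 2| ≤ 3 * k := by
  have hle₁ : (X'.ncard : ℝ) ≤ (X' \ X).ncard + X.ncard :=
    mod_cast Set.ncard_le_ncard_sdiff_add_ncard X' X
  have hle₂ : (X.ncard : ℝ) ≤ (X \ X').ncard + X'.ncard :=
    mod_cast Set.ncard_le_ncard_sdiff_add_ncard X X'
  rw [abs_le]
  constructor <;> linarith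

theorem SparsePair.exists_nearSplit (h : SparsePair G n (1 / 10 ^ 8) X Y) (hG : IsDirac G n)
    (hn : 0 < n) : ∃ d X Y, NearSplit G n d X Y := by
  have hα := h.ncard_fewNeighbors_sdiff_le hG hn
  have hα' := h.ncard_sdiff_fewNeighbors_le hn
  have hβ := h.swap.ncard_fewNeighbors_sdiff_le hG.swap hn
  have hβ' := h.swap.ncard_sdiff_fewNeighbors_le hn
  have hX : (n : ℝ) ≤ 2 * X.ncard := mod_cast h.le_left
  have hY : (n : ℝ) ≤ 2 * Y.ncard := mod_cast h.le_right
  refine exists_nearSplit_of_le_deg (X := fewNeighbors G n Y)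
    (Y := fewNeighbors (Prod.swap ⁻¹' G) n X) hG.card_left hG.card_right ?_ ?_
    (fun a => ?_) (fun b => ?_) ?_
  · exact (abs_ncard_sub_half_le (k := 2 / 10 ^ 8 * n) hX
      (by linarith [h.swap.ncard_right_le hG.swap hn]) (by linarith) (by linarith)).trans_eq
      (by ring)
  · exact (abs_ncard_sub_half_le (k := 2 / 10 ^ 8 * n) hY
      (by linarith [h.ncard_right_le hG hn]) (by linarith) (by linarith)).trans_eq (by ring)
  · linarith [hG.le_leftDeg_inter_across hβ hβ' a]
  · linarith [hG.le_rightDeg_inter_across hα hα' b]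
  · have hle := (Nat.cast_le (α := ℝ)).2 <| ncard_across_sdiff_le hG.card_left hG.card_right G X
      (fewNeighbors G n Y) Y (fewNeighbors (Prod.swap ⁻¹' G) n X)
    push_cast at hle
    nlinarith [h.ncard_prod_compl_sdiff_le hG, h.ncard_compl_prod_sdiff_le hG]

theorem IsDirac.hasRainbowMatching (hG : IsDirac G n) (hn : 10 ^ 10 ≤ n)
    (hχ : IsBoundedColoring G χ (1 / 10 ^ 19 * n)) : HasRainbowMatching G χ := by
  have hn' : (10 ^ 10 : ℝ) ≤ n := mod_cast hn
  by_cases hsparse : ∃ X Y, SparsePair G n (1 / 10 ^ 8) X Y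
  · obtain ⟨X, Y, h⟩ := hsparse
    obtain ⟨d, X', Y', h'⟩ := h.exists_nearSplit hG (by lia)
    exact h'.hasRainbowMatching hG hn hχ
  · refine hG.hasRainbowMatching_of_dense (c := 1 / 10 ^ 8) (by norm_num) (by norm_num)
      (by norm_num) (by linarith) hχ fun X Y hX hY => ?_
    by_contra! hlt
    exact hsparse ⟨X, Y, hX, hY, hlt.le⟩

end Extremal

section SimpleGraphs

variable {V κ : Type*} {G : SimpleGraph V} {A B : Set V} {M : A ≃ B} {n : ℕ} {m : ℝ}

/-- The edges of the simple graph `G` between `A` and `B`, as pairs. -/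
def edgesBetween (G : SimpleGraph V) (A B : Set V) : Set (A × B) := {e | G.Adj e.1 e.2}

lemma swap_preimage_edgesBetween (G : SimpleGraph V) (A B : Set V) :
    Prod.swap ⁻¹' edgesBetween G A B = edgesBetween G B A :=
  Set.ext fun _ => G.adj_comm _ _

lemma leftDeg_edgesBetween (hG : G.IsBipartiteWith A B) (a : A) :
    leftDeg (edgesBetween G A B) a = (G.neighborSet a).ncard := by
  rw [leftDeg, ← Set.ncard_image_of_injective _ Subtype.val_injective,
    SimpleGraph.isBipartiteWith_neighborSet hG a.2]
  congr 1
  ext v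
  simp [edgesBetween, and_comm]

lemma rightDeg_edgesBetween (hG : G.IsBipartiteWith A B) (b : B) :
    rightDeg (edgesBetween G A B) b = (G.neighborSet b).ncard := by
  rw [← leftDeg_edgesBetween hG.symm, ← swap_preimage_edgesBetween]
  rfl

lemma isDirac_edgesBetween (hG : G.IsBipartiteWith A B) (hA : A.ncard = n) (hB : B.ncard = n)
    (hdeg : ∀ v, (n : ℝ) / 2 ≤ (G.neighborSet v).ncard) : IsDirac (edgesBetween G A B) n := by
  have hdeg' : ∀ v, n ≤ 2 * (G.neighborSet v).ncard := fun v => by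
    have : (n : ℝ) ≤ 2 * (G.neighborSet v).ncard := by linarith [hdeg v]
    exact_mod_cast this
  exact ⟨hA, hB, fun a => leftDeg_edgesBetween hG a ▸ hdeg' a,
    fun b => rightDeg_edgesBetween hG b ▸ hdeg' b⟩

lemma isBoundedColoring_edgesBetween [Finite V] (hAB : Disjoint A B) {χ : Sym2 V → κ}
    (hχ : ∀ c, ({e | e ∈ G.edgeSet ∧ χ e = c}.ncard : ℝ) ≤ m) :
    IsBoundedColoring (edgesBetween G A B) (fun e => χ s(e.1, e.2)) m := fun c => by
  refine (Nat.cast_le.2 ?_).trans (hχ c)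
  refine Set.ncard_le_ncard_of_injOn (fun e => s((e.1 : V), (e.2 : V))) (fun e he => he) ?_
  rintro ⟨a, b⟩ _ ⟨a', b'⟩ _ h
  rcases Sym2.eq_iff.1 h with ⟨ha, hb⟩ | ⟨ha, _⟩
  · exact Prod.ext (Subtype.ext ha) (Subtype.ext hb)
  · exact (hAB.ne_of_mem a.2 b'.2 ha).elim

/-- The perfect matching `M` as a subgraph of `G`: its edges join each `a : A` to `M a`. -/
def matchingSubgraph (hM : IsPerfectMatching (edgesBetween G A B) M) : G.Subgraph where
  verts := Set.univ
  Adj u v := ∃ a : A, s((a : V), (M a : V)) = s(u, v)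
  adj_sub := by
    rintro u v ⟨a, h⟩
    rw [← SimpleGraph.mem_edgeSet, ← h]
    exact hM a
  edge_vert _ := Set.mem_univ _
  symm := ⟨fun _ _ ⟨a, h⟩ => ⟨a, h.trans Sym2.eq_swap⟩⟩

lemma exists_of_mem_edgeSet_matchingSubgraph {hM : IsPerfectMatching (edgesBetween G A B) M}
    {e : Sym2 V} (he : e ∈ (matchingSubgraph hM).edgeSet) : ∃ a : A, s((a : V), (M a : V)) = e := by
  induction e using Sym2.ind with
  | _ u v => exact he

lemma matchingSubgraph_isPerfectMatching (hcover : A ∪ B = Set.univ) (hAB : Disjoint A B)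
    (hM : IsPerfectMatching (edgesBetween G A B) M) :
    (matchingSubgraph hM).IsPerfectMatching := by
  refine SimpleGraph.Subgraph.isPerfectMatching_iff.2 fun v => ?_
  rcases hcover.symm ▸ Set.mem_univ v with hv | hv
  · refine ⟨M ⟨v, hv⟩, ⟨⟨v, hv⟩, rfl⟩, ?_⟩
    rintro w ⟨a, h⟩
    rcases Sym2.eq_iff.1 h with ⟨rfl, hw⟩ | ⟨_, hw⟩
    · exact hw.symm
    · exact (hAB.ne_of_mem hv (M a).2 hw.symm).elim
  · refine ⟨M.symm ⟨v, hv⟩, ⟨M.symm ⟨v, hv⟩, by rw [M.apply_symm_apply]; exact Sym2.eq_swap⟩, ?_⟩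
    rintro w ⟨a, h⟩
    rcases Sym2.eq_iff.1 h with ⟨hw, _⟩ | ⟨hw, rfl⟩
    · exact (hAB.ne_of_mem a.2 hv hw).elim
    · simp [← hw]

end SimpleGraphs

end RainbowMatching

open RainbowMatching in
theorem rainbow_PM_in_Dirac_bipartite_general {V κ : Type*} {n : ℕ} (hn : 10 ^ 10 ≤ n)
    {G : SimpleGraph V} {A B : Set V} (hcover : A ∪ B = Set.univ) (hG : G.IsBipartiteWith A B)
    (hA : A.ncard = n) (hB : B.ncard = n)
    (hdeg : ∀ v, (n : ℝ) / 2 ≤ (G.neighborSet v).ncard) {χ : Sym2 V → κ}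
    (hχ : ∀ c, ({e | e ∈ G.edgeSet ∧ χ e = c}.ncard : ℝ) ≤ 1 / 10 ^ 19 * n) :
    ∃ M : G.Subgraph, M.IsPerfectMatching ∧
      ∀ e ∈ M.edgeSet, ∀ f ∈ M.edgeSet, χ e = χ f → e = f := by
  have hfinA : A.Finite := Set.finite_of_ncard_pos (by lia)
  have hfinB : B.Finite := Set.finite_of_ncard_pos (by lia)
  have : Finite V := Set.finite_univ_iff.1 (hcover ▸ hfinA.union hfinB)
  obtain ⟨M, hM, hinj⟩ := (isDirac_edgesBetween hG hA hB hdeg).hasRainbowMatching hn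
    (isBoundedColoring_edgesBetween hG.disjoint hχ)
  refine ⟨matchingSubgraph hM, matchingSubgraph_isPerfectMatching hcover hG.disjoint hM, ?_⟩
  intro e he f hf hef
  obtain ⟨a, rfl⟩ := exists_of_mem_edgeSet_matchingSubgraph he
  obtain ⟨a', rfl⟩ := exists_of_mem_edgeSet_matchingSubgraph hf
  rw [hinj hef]

/-- There exist μ > 0 and n₀ ∈ ℕ such that for every n ≥ n₀: if G is a
Dirac bipartite graph on 2n vertices (balanced bipartite with parts A, B of size n and
minimum degree at least n/2), then every μn-bounded edge colouring χ of G admits a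
perfect matching of G that is rainbow with respect to χ. -/
theorem rainbow_PM_in_Dirac_bipartite :
    ∃ μ : ℝ, 0 < μ ∧ ∃ n₀ : ℕ, ∀ n : ℕ, n₀ ≤ n →
      ∀ (V : Type) [Fintype V] (G : SimpleGraph V) (A B : Set V),
        A ∪ B = Set.univ → Disjoint A B → A.ncard = n → B.ncard = n →
        (∀ u v : V, G.Adj u v → (u ∈ A ∧ v ∈ B) ∨ (u ∈ B ∧ v ∈ A)) →
        (∀ v : V, (n : ℝ) / 2 ≤ ((G.neighborSet v).ncard : ℝ)) →
        ∀ χ : Sym2 V → ℕ,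
          (∀ c : ℕ, (({e : Sym2 V | e ∈ G.edgeSet ∧ χ e = c}).ncard : ℝ) ≤ μ * n) →
          ∃ M : G.Subgraph, M.IsPerfectMatching ∧
            ∀ e ∈ M.edgeSet, ∀ f ∈ M.edgeSet, χ e = χ f → e = f :=
  ⟨1 / 10 ^ 19, by norm_num, 10 ^ 10, fun _ hn _ _ _ _ _ hcover hAB hA hB hbip hdeg _ hχ =>
    rainbow_PM_in_Dirac_bipartite_general hn hcover ⟨hAB, hbip⟩ hA hB hdeg hχ⟩
end

section
/- For every ε > 0 there exist μ > 0 and n₀ ∈ ℕ such that for every n ≥ n₀ the following holds: if G is a balanced bipartite graph on 2n vertices with minimum degree δ(G) ≥ (1/2 + ε)n, then for every μn-bounded system of conflicts F for E(G) there exists a perfect matching of G that is F-conflict-free. -/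
/-!
Pick a perfect matching uniformly at random and apply the lopsided Lovász local lemma to the events
"both edges of a given conflict are chosen". Conditioned on avoiding any conflicts that share no
vertex with an edge `ab`, the probability of choosing `ab` is `O(1 / (ε n))`: a matching through
`ab` can be rerouted along a random alternating hexagon through `ab`, and a positive proportion of
the hexagons creates no conflict. A pair of edges thus has probability `O(1 / (ε n)²)`, and it
shares a vertex with only `O(μ n²)` conflicts. With `μ = ε² / 512` this works for every `n`: if
`μ n < 1` there are no conflicts, and otherwise `n` is large in terms of `ε`.
-/

open Finset MeasureTheory

section LocalLemma

variable {Ω ι : Type*} {A : ι → Set Ω} {S T : Finset ι}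

/-- The event that none of the events `A j`, `j ∈ S`, occurs. -/
def avoiding (A : ι → Set Ω) (S : Finset ι) : Set Ω :=
  ⋂ j ∈ S, (A j)ᶜ

lemma mem_avoiding {ω : Ω} : ω ∈ avoiding A S ↔ ∀ j ∈ S, ω ∉ A j := by
  simp [avoiding]

lemma avoiding_subset_avoiding (h : S ⊆ T) : avoiding A T ⊆ avoiding A S :=
  Set.biInter_subset_biInter_left h

variable [MeasurableSpace Ω] {μ : Measure Ω} [IsFiniteMeasure μ] {Γ : ι → ι → Prop} {I : Finset ι}
  {p d : ℝ}

lemma measureReal_avoiding_le_add_sum [DecidableEq ι] (S T : Finset ι) :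
    μ.real (avoiding A T) ≤
      μ.real (avoiding A (S ∪ T)) + ∑ j ∈ S, μ.real (A j ∩ avoiding A T) := by
  have hcover : avoiding A T ⊆ avoiding A (S ∪ T) ∪ ⋃ j ∈ S, A j ∩ avoiding A T := by
    intro ω hω
    by_cases hS : ω ∈ avoiding A S
    · exact .inl <| mem_avoiding.2 fun j hj ↦
        (mem_union.1 hj).elim (mem_avoiding.1 hS j) (mem_avoiding.1 hω j)
    · simp only [mem_avoiding, not_forall, not_not] at hS
      obtain ⟨j, hj, hωj⟩ := hS
      exact .inr <| Set.mem_biUnion hj ⟨hωj, hω⟩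
  calc μ.real (avoiding A T)
      ≤ μ.real (avoiding A (S ∪ T) ∪ ⋃ j ∈ S, A j ∩ avoiding A T) := measureReal_mono hcover
    _ ≤ μ.real (avoiding A (S ∪ T)) + μ.real (⋃ j ∈ S, A j ∩ avoiding A T) :=
        measureReal_union_le _ _
    _ ≤ _ := by gcongr; exact measureReal_biUnion_finset_le _ _

/-- `Γ` is a lopsidependency digraph for the events `A i`, `i ∈ I`, with probability bound `p`:
conditioned on avoiding non-neighbours of `i`, the event `A i` has probability at most `p`. The
condition is multiplied out, so `μ` need not be normalized. -/
def IsLopsidependent (μ : Measure Ω) (A : ι → Set Ω) (Γ : ι → ι → Prop) (I : Finset ι) (p : ℝ) :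
    Prop :=
  ∀ i ∈ I, ∀ S ⊆ I, (∀ j ∈ S, ¬ Γ i j) →
    μ.real (A i ∩ avoiding A S) ≤ p * μ.real (avoiding A S)

open Classical in
lemma IsLopsidependent.measureReal_inter_avoiding_le (h : IsLopsidependent μ A Γ I p) (hp : 0 ≤ p)
    (hpd : 4 * p * d ≤ 1) (hd : ∀ i ∈ I, #{j ∈ I | Γ i j} ≤ d) {i : ι} (hi : i ∈ I) (hS : S ⊆ I) :
    μ.real (A i ∩ avoiding A S) ≤ 2 * p * μ.real (avoiding A S) := by
  induction S using Finset.strongInduction generalizing i with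
  | H S ih =>
  set N : Finset ι := {j ∈ S | Γ i j}
  set T : Finset ι := {j ∈ S | ¬ Γ i j}
  have hTS : T ⊆ S := filter_subset _ _
  have hcond : μ.real (A i ∩ avoiding A T) ≤ p * μ.real (avoiding A T) :=
    h i hi T (hTS.trans hS) fun j hj ↦ (mem_filter.1 hj).2
  have hhalf : μ.real (avoiding A T) ≤ 2 * μ.real (avoiding A S) := by
    rcases hTS.eq_or_ssubset with hT | hT
    · rw [hT]
      linarith [measureReal_nonneg (μ := μ) (s := avoiding A S)]
    have hN : (#N : ℝ) ≤ d :=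
      le_trans (mod_cast card_le_card (filter_subset_filter _ hS)) (hd i hi)
    have hsum : ∑ j ∈ N, μ.real (A j ∩ avoiding A T) ≤ μ.real (avoiding A T) / 2 :=
      calc ∑ j ∈ N, μ.real (A j ∩ avoiding A T)
          ≤ #N • (2 * p * μ.real (avoiding A T)) := sum_le_card_nsmul _ _ _ fun j hj ↦
            ih T hT (hS (mem_filter.1 hj).1) (hTS.trans hS)
        _ ≤ d * (2 * p * μ.real (avoiding A T)) := by rw [nsmul_eq_mul]; gcongr
        _ = 4 * p * d * (μ.real (avoiding A T) / 2) := by ring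
        _ ≤ μ.real (avoiding A T) / 2 := mul_le_of_le_one_left (by positivity) hpd
    have hunion := measureReal_avoiding_le_add_sum (μ := μ) (A := A) N T
    rw [filter_union_filter_not_eq] at hunion
    linarith
  calc μ.real (A i ∩ avoiding A S)
      ≤ μ.real (A i ∩ avoiding A T) :=
        measureReal_mono (Set.inter_subset_inter_right _ (avoiding_subset_avoiding hTS))
    _ ≤ p * μ.real (avoiding A T) := hcond
    _ ≤ p * (2 * μ.real (avoiding A S)) := by gcongr
    _ = 2 * p * μ.real (avoiding A S) := by ring

open Classical in
theorem IsLopsidependent.measureReal_avoiding_pos (h : IsLopsidependent μ A Γ I p) (hμ : μ ≠ 0)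
    (hp : 0 ≤ p) (hp' : 2 * p < 1) (hpd : 4 * p * d ≤ 1) (hd : ∀ i ∈ I, #{j ∈ I | Γ i j} ≤ d) :
    0 < μ.real (avoiding A I) := by
  suffices ∀ S ⊆ I, 0 < μ.real (avoiding A S) from this I subset_rfl
  intro S hS
  induction S using Finset.induction_on with
  | empty =>
    have : NeZero μ := ⟨hμ⟩
    simp [avoiding]
  | insert i S _ ih =>
    obtain ⟨hi, hS⟩ := insert_subset_iff.1 hS
    have hcond := h.measureReal_inter_avoiding_le hp hpd hd hi hS
    have hunion := measureReal_avoiding_le_add_sum (μ := μ) (A := A) {i} S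
    rw [sum_singleton, ← insert_eq] at hunion
    nlinarith [ih hS]

end LocalLemma

lemma card_filter_comp_equiv {α β : Type*} [Fintype α] [Fintype β] (P : β → Prop) [DecidablePred P]
    (e : α ≃ β) : #{a | P (e a)} = #{b | P b} :=
  card_equiv e (by simp)

open Classical in
lemma card_filter_fst_eq_or_snd_eq_le {α β : Type*} [Fintype α] [Fintype β] (e : α × β) :
    #{f : α × β | f.1 = e.1 ∨ f.2 = e.2} ≤ Fintype.card α + Fintype.card β := by
  have hfst : (univ.filter fun f : α × β ↦ f.1 = e.1) = {e.1} ×ˢ univ := by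
    ext
    simp only [mem_filter_univ, mem_product, mem_singleton, mem_univ, and_true]
  have hsnd : (univ.filter fun f : α × β ↦ f.2 = e.2) = univ ×ˢ {e.2} := by
    ext
    simp only [mem_filter_univ, mem_product, mem_singleton, mem_univ, true_and]
  rw [filter_or, hfst, hsnd, add_comm]
  refine (card_union_le _ _).trans_eq ?_
  simp only [card_product, card_singleton, card_univ, one_mul, mul_one]

open Classical in
lemma measureReal_count_restrict {Ω : Type*} [Fintype Ω] [MeasurableSpace Ω]
    [DiscreteMeasurableSpace Ω] (X E : Set Ω) :
    (Measure.count.restrict X).real E = #{ω | ω ∈ X ∧ ω ∈ E} := by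
  have hcoe : E ∩ X = ({ω | ω ∈ X ∧ ω ∈ E} : Finset Ω) := by
    ext
    simp [and_comm]
  rw [measureReal_restrict_apply .of_discrete, hcoe, measureReal_def, Measure.count_apply_finset,
    ENNReal.toReal_natCast]

section Switching

variable {α β : Type*}

/-- `σ` is a perfect matching of the bipartite graph on the parts `α` and `β` with adjacency
relation `R`. -/
def IsMatchingIn (R : α → β → Prop) (σ : α ≃ β) : Prop :=
  ∀ a, R a (σ a)

/-- The bipartite graph on the parts `α` and `β` with adjacency relation `R` has minimum degree at
least `δ`. -/
structure HasMinDegree [Fintype α] [Fintype β] (R : α → β → Prop) (δ : ℝ) : Prop where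
  left : open Classical in ∀ a, δ ≤ #{b | R a b}
  right : open Classical in ∀ b, δ ≤ #{a | R a b}

/-- The conflict relation `C` on the edges between the parts `α` and `β` is `k`-bounded. -/
def ConflictsBounded [Fintype α] [Fintype β] (C : α × β → α × β → Prop) (k : ℕ) : Prop :=
  open Classical in ∀ e, #{f | C e f} ≤ k

/-- The matching obtained from `σ` by replacing the edges at `a`, `x`, `y` with
`a — σ x`, `x — σ y`, `y — σ a`. -/
def switch [DecidableEq α] (σ : α ≃ β) (a x y : α) : α ≃ β :=
  (Equiv.swap x y).trans ((Equiv.swap a x).trans σ)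

/-- The edges of `σ` at `a`, `x`, `y`, together with three edges of `R`, form a hexagon that
alternates between the matching `σ` and its `switch`, and that avoids the vertices of `Q`. -/
structure IsHexagon (R : α → β → Prop) (Q : Finset α) (σ : α ≃ β) (a x y : α) : Prop where
  fst_ne : x ≠ a
  snd_ne : y ≠ a
  snd_ne_fst : y ≠ x
  fst_notMem : x ∉ Q
  snd_notMem : y ∉ Q
  adj_left : R a (σ x)
  adj_fst : R x (σ y)
  adj_snd : R y (σ a)

/-- Switching `σ` along the hexagon creates no conflict among pairs of edges that do not meet the
edge of `σ` at `a`. Only the new edge at `x` matters for this, since the other two new edges meet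
the edge of `σ` at `a`. -/
structure IsAdmissible (R : α → β → Prop) (C : α × β → α × β → Prop) (Q : Finset α) (σ : α ≃ β)
    (a x y : α) : Prop extends IsHexagon R Q σ a x y where
  conflictFree : ∀ z, ¬ C (z, σ z) (x, σ y)

/-- The matchings that contain both edges of the pair `i`. -/
def containing (i : (α × β) × (α × β)) : Set (α ≃ β) :=
  {σ | σ i.1.1 = i.1.2 ∧ σ i.2.1 = i.2.2}

/-- One of the two edges of the pair `j` shares a vertex with `e`. -/
def MeetsPair (e : α × β) (j : (α × β) × (α × β)) : Prop :=
  (j.1.1 = e.1 ∨ j.1.2 = e.2) ∨ (j.2.1 = e.1 ∨ j.2.2 = e.2)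

variable {R : α → β → Prop} {C : α × β → α × β → Prop} {Q : Finset α} {σ : α ≃ β} {a x y z : α}
  {b : β} {s δ : ℝ} {k : ℕ}

section Switch

variable [DecidableEq α]

lemma switch_apply_snd : switch σ a x y y = σ a := by
  simp [switch]

lemma switch_apply_left (hx : x ≠ a) (hy : y ≠ a) : switch σ a x y a = σ x := by
  simp [switch, Equiv.swap_apply_of_ne_of_ne hx.symm hy.symm]

lemma switch_apply_fst (hy : y ≠ a) (hyx : y ≠ x) : switch σ a x y x = σ y := by
  simp [switch, Equiv.swap_apply_of_ne_of_ne hy hyx]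

lemma switch_apply_of_ne (ha : z ≠ a) (hx : z ≠ x) (hy : z ≠ y) : switch σ a x y z = σ z := by
  simp [switch, Equiv.swap_apply_of_ne_of_ne hx hy, Equiv.swap_apply_of_ne_of_ne ha hx]

lemma switch_left_injective : Function.Injective fun σ : α ≃ β ↦ switch σ a x y := by
  intro σ τ h
  ext z
  simpa [switch] using
    DFunLike.congr_fun h (((Equiv.swap x y).trans (Equiv.swap a x)).symm z)

lemma IsHexagon.isMatchingIn_switch (h : IsHexagon R Q σ a x y) (hσ : IsMatchingIn R σ) :
    IsMatchingIn R (switch σ a x y) := by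
  intro z
  by_cases ha : z = a
  · rw [ha, switch_apply_left h.fst_ne h.snd_ne]
    exact h.adj_left
  by_cases hx : z = x
  · rw [hx, switch_apply_fst h.snd_ne h.snd_ne_fst]
    exact h.adj_fst
  by_cases hy : z = y
  · rw [hy, switch_apply_snd]
    exact h.adj_snd
  · rw [switch_apply_of_ne ha hx hy]
    exact hσ z

lemma IsHexagon.switch_apply_of_mem (h : IsHexagon R Q σ a x y) (hz : z ∈ Q) (ha : z ≠ a) :
    switch σ a x y z = σ z :=
  switch_apply_of_ne ha (fun hx ↦ h.fst_notMem (hx ▸ hz)) fun hy ↦ h.snd_notMem (hy ▸ hz)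

lemma IsAdmissible.switch_notMem_containing [Std.Symm C] (h : IsAdmissible R C Q σ a x y)
    {j : (α × β) × (α × β)} (hj : C j.1 j.2) (hne : j.1.1 ≠ j.2.1) (hmeet : ¬ MeetsPair (a, σ a) j)
    (hσ : σ ∉ containing j) : switch σ a x y ∉ containing j := by
  obtain ⟨⟨u, u'⟩, ⟨v, v'⟩⟩ := j
  simp only [MeetsPair, not_or] at hmeet
  obtain ⟨⟨hua, hub⟩, hva, hvb⟩ := hmeet
  rintro ⟨hu : switch σ a x y u = u', hv : switch σ a x y v = v'⟩
  have apply_eq_of_ne_fst :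
      ∀ {z}, z ≠ a → switch σ a x y z ≠ σ a → z ≠ x → σ z = switch σ a x y z :=
    fun ha hb hx ↦ (switch_apply_of_ne ha hx fun hy ↦ hb (hy ▸ switch_apply_snd)).symm
  have hσu : u ≠ x → σ u = u' := fun hx ↦ hu ▸ apply_eq_of_ne_fst hua (hu ▸ hub) hx
  have hσv : v ≠ x → σ v = v' := fun hx ↦ hv ▸ apply_eq_of_ne_fst hva (hv ▸ hvb) hx
  have hσy : switch σ a x y x = σ y := switch_apply_fst h.snd_ne h.snd_ne_fst
  by_cases hux : u = x
  · subst hux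
    apply h.conflictFree v
    rw [hσv hne.symm, ← hσy, hu]
    exact symm_of C hj
  by_cases hvx : v = x
  · subst hvx
    apply h.conflictFree u
    rwa [hσu hux, ← hσy, hv]
  · exact hσ ⟨hσu hux, hσv hvx⟩

lemma sum_card_le_card_mul_card_of_switch_mem [Fintype α] [DecidableEq β]
    {X : Finset (α ≃ β)} {T : (α ≃ β) → Finset (α × α)}
    (hT : ∀ σ ∈ X, σ a = b → ∀ z ∈ T σ, switch σ a z.1 z.2 ∈ X) :
    ∑ σ ∈ X with σ a = b, #(T σ) ≤ #X * Fintype.card α := by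
  rw [← card_sigma, ← card_univ, ← card_product]
  -- The switched matching and `x` determine `y`, the preimage of `b`, and then `σ`.
  refine card_le_card_of_injOn (fun q ↦ (switch q.1 a q.2.1 q.2.2, q.2.1)) ?_ ?_
  · rintro ⟨σ, z⟩ hq
    simp only [coe_sigma, Set.mem_sigma_iff, mem_coe, mem_filter] at hq
    simpa using hT σ hq.1.1 hq.1.2 z hq.2
  · rintro ⟨σ, x, y⟩ hq ⟨τ, x', y'⟩ hq' heq
    simp only [coe_sigma, Set.mem_sigma_iff, mem_coe, mem_filter] at hq hq'
    simp only [Prod.mk.injEq] at heq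
    obtain ⟨hswitch, rfl⟩ := heq
    obtain rfl : y = y' := (switch σ a x y).injective <| by
      rw [switch_apply_snd, hswitch, switch_apply_snd, hq.1.2, hq'.1.2]
    obtain rfl := switch_left_injective hswitch
    rfl

end Switch

variable [Fintype α] [Fintype β]

lemma HasMinDegree.exists_isMatchingIn (hR : HasMinDegree R δ)
    (hcard : Fintype.card α = Fintype.card β) (hδ : Fintype.card α ≤ 2 * δ) :
    ∃ σ : α ≃ β, IsMatchingIn R σ := by
  classical
  have hleft : ∀ a, Fintype.card α ≤ 2 * #{b | R a b} := fun a ↦ by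
    have := hR.left a
    rify
    linarith
  have hright : ∀ b, Fintype.card α ≤ 2 * #{a | R a b} := fun b ↦ by
    have := hR.right b
    rify
    linarith
  have hall : ∀ S : Finset α, #S ≤ #{b | ∃ a ∈ S, R a b} := by
    intro S
    by_cases hS : ∃ b, ∀ a ∈ S, ¬ R a b
    · obtain ⟨b, hb⟩ := hS
      have hdisj : Disjoint S (univ.filter (R · b)) := by
        simpa [Finset.disjoint_left] using hb
      have hS : #S + #{a | R a b} ≤ Fintype.card α := by
        rw [← card_union_of_disjoint hdisj]
        exact card_le_univ _
      obtain rfl | ⟨a, ha⟩ := S.eq_empty_or_nonempty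
      · simp
      have hN : #{b | R a b} ≤ #{b | ∃ a ∈ S, R a b} :=
        card_le_card (monotone_filter_right _ fun b _ hab ↦ ⟨a, ha, hab⟩)
      have := hleft a
      have := hright b
      lia
    · push Not at hS
      simp only [hS, filter_true, card_univ, ← hcard]
      exact card_le_univ S
  obtain ⟨f, hf, hRf⟩ := (Fintype.all_card_le_filter_rel_iff_exists_injective R).1 hall
  exact ⟨.ofBijective f ((Fintype.bijective_iff_injective_and_card f).2 ⟨hf, hcard⟩), hRf⟩

open Classical in
lemma HasMinDegree.two_mul_le_card_common (hR : HasMinDegree R (Fintype.card α / 2 + s)) (σ : α ≃ β)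
    (x : α) (b : β) : 2 * s ≤ #{y | R x (σ y) ∧ R y b} := by
  have hunion : #{b | R x b} + #{y | R y b} ≤ Fintype.card α + #{y | R x (σ y) ∧ R y b} := by
    rw [← card_filter_comp_equiv (R x) σ, ← card_union_add_card_inter, ← filter_and]
    gcongr
    exact card_le_univ _
  rify at hunion
  linarith [hR.left x, hR.right b]

open Classical in
lemma ConflictsBounded.card_exists_conflict_le (hC : ConflictsBounded C k) (σ : α ≃ β) :
    #{z : α × α | ∃ w, C (w, σ w) (z.1, σ z.2)} ≤ Fintype.card α * k := by
  have hunion : ({z : α × α | ∃ w, C (w, σ w) (z.1, σ z.2)} : Finset (α × α)) =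
      univ.biUnion fun w ↦ {z : α × α | C (w, σ w) (z.1, σ z.2)} := by
    ext
    simp
  rw [hunion]
  refine card_biUnion_le_card_mul _ _ _ fun w _ ↦ ?_
  exact (card_filter_comp_equiv (C (w, σ w)) ((Equiv.refl α).prodCongr σ)).trans_le (hC _)

open Classical in
lemma HasMinDegree.card_isHexagon_ge (hR : HasMinDegree R (Fintype.card α / 2 + s)) (hs : 3 ≤ s)
    (hQ : #Q ≤ 1) (σ : α ≃ β) (a : α) :
    Fintype.card α / 2 * s ≤ #{z : α × α | IsHexagon R Q σ a z.1 z.2} := by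
  let U : Finset α := univ.filter (fun x ↦ R a (σ x)) \ insert a Q
  let W (x : α) : Finset α := univ.filter (fun y ↦ R x (σ y) ∧ R y (σ a)) \ insert x (insert a Q)
  have hinsert : #(insert a Q) ≤ 2 := (card_insert_le a Q).trans (by lia)
  have hU : (Fintype.card α / 2 : ℝ) ≤ #U := by
    have hsdiff : #{x | R a (σ x)} ≤ #U + 2 := by
      have := le_card_sdiff (insert a Q) (univ.filter fun x ↦ R a (σ x))
      lia
    rw [card_filter_comp_equiv (R a) σ] at hsdiff
    rify at hsdiff
    linarith [hR.left a]
  have hW (x : α) : s ≤ #(W x) := by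
    have hsdiff : #{y | R x (σ y) ∧ R y (σ a)} ≤ #(W x) + 3 := by
      have := le_card_sdiff (insert x (insert a Q)) (univ.filter fun y ↦ R x (σ y) ∧ R y (σ a))
      have := card_insert_le x (insert a Q)
      lia
    rify at hsdiff
    linarith [hR.two_mul_le_card_common σ x (σ a)]
  have hsub : (U.sigma W).map (Equiv.sigmaEquivProd α α).toEmbedding ⊆
      univ.filter fun z ↦ IsHexagon R Q σ a z.1 z.2 := by
    rintro ⟨x, y⟩ hxy
    simp only [U, W, mem_map_equiv, mem_sigma, mem_sdiff, mem_filter_univ, mem_insert, not_or,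
      Equiv.sigmaEquivProd_symm_apply] at hxy
    obtain ⟨⟨hadj_a, hxa, hxQ⟩, ⟨hadj_x, hadj_y⟩, hyx, hya, hyQ⟩ := hxy
    exact mem_filter_univ _ |>.2 ⟨hxa, hya, hyx, hxQ, hyQ, hadj_a, hadj_x, hadj_y⟩
  calc Fintype.card α / 2 * s
      ≤ #U * s := by gcongr
    _ ≤ ∑ x ∈ U, (#(W x) : ℝ) := by
        simpa using card_nsmul_le_sum U (fun x ↦ (#(W x) : ℝ)) s fun x _ ↦ hW x
    _ = #((U.sigma W).map (Equiv.sigmaEquivProd α α).toEmbedding) := by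
        rw [card_map, card_sigma, Nat.cast_sum]
    _ ≤ _ := mod_cast card_le_card hsub

open Classical in
lemma card_isAdmissible_ge (hR : HasMinDegree R (Fintype.card α / 2 + s))
    (hC : ConflictsBounded C k) (hs : 3 ≤ s) (hk : 4 * k ≤ s) (hQ : #Q ≤ 1) (σ : α ≃ β) (a : α) :
    s / 4 * Fintype.card α ≤ #{z : α × α | IsAdmissible R C Q σ a z.1 z.2} := by
  have hcover : (univ.filter fun z : α × α ↦ IsHexagon R Q σ a z.1 z.2) ⊆
      (univ.filter fun z ↦ IsAdmissible R C Q σ a z.1 z.2) ∪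
        univ.filter fun z ↦ ∃ w, C (w, σ w) (z.1, σ z.2) := by
    intro z hz
    simp only [mem_union, mem_filter_univ] at hz ⊢
    exact or_iff_not_imp_right.2 fun hz' ↦ ⟨hz, not_exists.1 hz'⟩
  have hcard : #{z : α × α | IsHexagon R Q σ a z.1 z.2} ≤
      #{z : α × α | IsAdmissible R C Q σ a z.1 z.2} + Fintype.card α * k :=
    ((card_le_card hcover).trans (card_union_le _ _)).trans <| by
      gcongr
      exact hC.card_exists_conflict_le σ
  have hconflicts : Fintype.card α * (4 * k) ≤ Fintype.card α * s := by gcongr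
  rify at hcard
  linarith [hR.card_isHexagon_ge hs hQ σ a]

lemma mul_card_filter_apply_eq_le [DecidableEq α] [DecidableEq β] {X : Finset (α ≃ β)}
    (hR : HasMinDegree R (Fintype.card α / 2 + s)) (hC : ConflictsBounded C k) (hs : 3 ≤ s)
    (hk : 4 * k ≤ s) (hQ : #Q ≤ 1)
    (hX : ∀ σ ∈ X, σ a = b → ∀ x y, IsAdmissible R C Q σ a x y → switch σ a x y ∈ X) :
    s / 4 * #{σ ∈ X | σ a = b} ≤ #X := by
  classical
  have hcard : (0 : ℝ) < Fintype.card α := mod_cast Fintype.card_pos_iff.2 ⟨a⟩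
  let T (σ : α ≃ β) : Finset (α × α) := {z | IsAdmissible R C Q σ a z.1 z.2}
  have hT : ∑ σ ∈ X with σ a = b, #(T σ) ≤ #X * Fintype.card α :=
    sum_card_le_card_mul_card_of_switch_mem fun σ hσ hab z hz ↦
      hX σ hσ hab z.1 z.2 (mem_filter_univ z |>.1 hz)
  refine le_of_mul_le_mul_right ?_ hcard
  calc s / 4 * #{σ ∈ X | σ a = b} * Fintype.card α
      = #{σ ∈ X | σ a = b} • (s / 4 * Fintype.card α) := by rw [nsmul_eq_mul]; ring
    _ ≤ ∑ σ ∈ X with σ a = b, (#(T σ) : ℝ) :=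
        card_nsmul_le_sum _ _ _ fun σ _ ↦ card_isAdmissible_ge hR hC hs hk hQ σ a
    _ ≤ #X * Fintype.card α := mod_cast hT

open Classical in
/-- The ordered pairs of conflicting edges that a matching could contain. -/
noncomputable def conflictPairs (C : α × β → α × β → Prop) : Finset ((α × β) × (α × β)) :=
  {i | C i.1 i.2 ∧ i.1.1 ≠ i.2.1}

open Classical in
/-- The perfect matchings of `R` that contain none of the pairs of edges in `S`. -/
noncomputable def matchingsAvoiding (R : α → β → Prop) (S : Finset ((α × β) × (α × β))) :
    Finset (α ≃ β) :=
  {σ | IsMatchingIn R σ ∧ σ ∈ avoiding containing S}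

variable {S : Finset ((α × β) × (α × β))}

lemma mem_conflictPairs {i : (α × β) × (α × β)} :
    i ∈ conflictPairs C ↔ C i.1 i.2 ∧ i.1.1 ≠ i.2.1 := by
  simp [conflictPairs]

lemma mem_matchingsAvoiding :
    σ ∈ matchingsAvoiding R S ↔ IsMatchingIn R σ ∧ σ ∈ avoiding containing S := by
  simp [matchingsAvoiding]

lemma IsAdmissible.switch_mem_matchingsAvoiding [DecidableEq α] [Std.Symm C]
    (h : IsAdmissible R C Q σ a x y) (hS : S ⊆ conflictPairs C)
    (hmeet : ∀ j ∈ S, ¬ MeetsPair (a, σ a) j) (hσ : σ ∈ matchingsAvoiding R S) :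
    switch σ a x y ∈ matchingsAvoiding R S := by
  simp only [mem_matchingsAvoiding, mem_avoiding] at hσ ⊢
  refine ⟨h.isMatchingIn_switch hσ.1, fun j hj ↦ ?_⟩
  obtain ⟨hCj, hne⟩ := mem_conflictPairs.1 (hS hj)
  exact h.switch_notMem_containing hCj hne (hmeet j hj) (hσ.2 j hj)

/-- Some edge of the pair `i` shares a vertex with some edge of the pair `j`. This is the dependency
relation for the local lemma. -/
def SharesVertex (i j : (α × β) × (α × β)) : Prop :=
  MeetsPair i.1 j ∨ MeetsPair i.2 j

open Classical in
lemma sq_mul_card_filter_containing_le [Std.Symm C] (hR : HasMinDegree R (Fintype.card α / 2 + s))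
    (hC : ConflictsBounded C k) (hs : 3 ≤ s) (hk : 4 * k ≤ s) (hS : S ⊆ conflictPairs C)
    {i : (α × β) × (α × β)} (hi : i.1.1 ≠ i.2.1) (hiS : ∀ j ∈ S, ¬ SharesVertex i j) :
    (s / 4) ^ 2 * #{σ ∈ matchingsAvoiding R S | σ ∈ containing i} ≤ #(matchingsAvoiding R S) := by
  obtain ⟨⟨a, b⟩, ⟨a', b'⟩⟩ := i
  simp only [SharesVertex, not_or] at hiS
  set X := matchingsAvoiding R S
  set X' := X.filter fun σ ↦ σ a' = b'
  have hsecond : s / 4 * #X' ≤ #X := by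
    refine mul_card_filter_apply_eq_le hR hC hs hk (Q := ∅) (by simp) ?_
    rintro σ hσ rfl x y h
    exact h.switch_mem_matchingsAvoiding hS (fun j hj ↦ (hiS j hj).2) hσ
  have hfirst : s / 4 * #{σ ∈ X' | σ a = b} ≤ #X' := by
    -- Hexagons that avoid the second edge keep it in the matching.
    refine mul_card_filter_apply_eq_le hR hC hs hk (Q := {a'}) (by simp) ?_
    rintro σ hσ rfl x y h
    obtain ⟨hσX, hσa'⟩ := mem_filter.1 hσ
    refine mem_filter.2 ⟨h.switch_mem_matchingsAvoiding hS (fun j hj ↦ (hiS j hj).1) hσX, ?_⟩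
    rw [h.switch_apply_of_mem (mem_singleton_self a') hi.symm, hσa']
  have hboth : X.filter (· ∈ containing ((a, b), (a', b'))) = X'.filter fun σ ↦ σ a = b := by
    rw [filter_filter]
    exact filter_congr fun σ _ ↦ and_comm
  calc (s / 4) ^ 2 * #{σ ∈ X | σ ∈ containing ((a, b), (a', b'))}
      = s / 4 * (s / 4 * #{σ ∈ X' | σ a = b}) := by rw [hboth]; ring
    _ ≤ s / 4 * #X' := by gcongr
    _ ≤ #X := hsecond

open Classical in
lemma ConflictsBounded.card_meetsPair_le [Std.Symm C] (hC : ConflictsBounded C k) (e : α × β) :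
    #{j ∈ conflictPairs C | MeetsPair e j} ≤ 2 * ((Fintype.card α + Fintype.card β) * k) := by
  let P : Finset (Σ _ : α × β, α × β) :=
    (univ.filter fun f : α × β ↦ f.1 = e.1 ∨ f.2 = e.2).sigma fun f ↦ {f' | C f f'}
  have hP : #P ≤ (Fintype.card α + Fintype.card β) * k := by
    rw [card_sigma]
    refine (sum_le_card_nsmul _ _ k fun f _ ↦ hC f).trans ?_
    rw [smul_eq_mul]
    gcongr
    exact card_filter_fst_eq_or_snd_eq_le e
  have hsub : (conflictPairs C).filter (MeetsPair e) ⊆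
      P.image (fun q ↦ (q.1, q.2)) ∪ P.image fun q ↦ (q.2, q.1) := by
    rintro ⟨f, f'⟩ hj
    obtain ⟨hj, hfirst | hsecond⟩ := mem_filter.1 hj
    · refine mem_union_left _ (mem_image.2 ⟨⟨f, f'⟩, ?_, rfl⟩)
      simpa [P, hfirst] using (mem_conflictPairs.1 hj).1
    · refine mem_union_right _ (mem_image.2 ⟨⟨f', f⟩, ?_, rfl⟩)
      simpa [P, hsecond] using symm_of C (mem_conflictPairs.1 hj).1
  calc #{j ∈ conflictPairs C | MeetsPair e j}
      ≤ #(P.image fun q ↦ (q.1, q.2)) + #(P.image fun q ↦ (q.2, q.1)) :=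
        (card_le_card hsub).trans (card_union_le _ _)
    _ ≤ #P + #P := by gcongr <;> exact card_image_le
    _ ≤ 2 * ((Fintype.card α + Fintype.card β) * k) := by lia

open Classical in
lemma ConflictsBounded.card_sharesVertex_le [Std.Symm C] (hC : ConflictsBounded C k)
    (i : (α × β) × (α × β)) :
    #{j ∈ conflictPairs C | SharesVertex i j} ≤ 4 * ((Fintype.card α + Fintype.card β) * k) := by
  have hunion : (conflictPairs C).filter (SharesVertex i) =
      (conflictPairs C).filter (MeetsPair i.1) ∪ (conflictPairs C).filter (MeetsPair i.2) := by
    ext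
    simp only [SharesVertex, mem_union, mem_filter, and_or_left]
  rw [hunion]
  refine (card_union_le _ _).trans ?_
  have := hC.card_meetsPair_le i.1
  have := hC.card_meetsPair_le i.2
  lia

lemma isLopsidependent_containing [MeasurableSpace (α ≃ β)] [DiscreteMeasurableSpace (α ≃ β)]
    [Std.Symm C] (hR : HasMinDegree R (Fintype.card α / 2 + s)) (hC : ConflictsBounded C k)
    (hs : 3 ≤ s) (hk : 4 * k ≤ s) :
    IsLopsidependent (Measure.count.restrict {σ : α ≃ β | IsMatchingIn R σ}) containing
      SharesVertex (conflictPairs C) ((s / 4) ^ 2)⁻¹ := by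
  classical
  set μ : Measure (α ≃ β) := Measure.count.restrict {σ | IsMatchingIn R σ}
  intro i hi S hS hiS
  have hcond : μ.real (avoiding containing S) = #(matchingsAvoiding R S) :=
    measureReal_count_restrict _ _
  have hjoint : μ.real (containing i ∩ avoiding containing S) =
      #{σ ∈ matchingsAvoiding R S | σ ∈ containing i} := by
    rw [measureReal_count_restrict]
    congr 2
    ext σ
    simp only [mem_filter, mem_univ, mem_matchingsAvoiding, Set.mem_inter_iff, Set.mem_ofPred_eq]
    tauto
  rw [hcond, hjoint, le_inv_mul_iff₀ (by positivity)]
  exact sq_mul_card_filter_containing_le hR hC hs hk hS (mem_conflictPairs.1 hi).2 hiS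

lemma exists_isMatchingIn_conflictFree_of_le [Std.Symm C]
    (hcard : Fintype.card α = Fintype.card β) (hR : HasMinDegree R (Fintype.card α / 2 + s))
    (hC : ConflictsBounded C k) (hs : 6 ≤ s) (hk : 4 * k ≤ s)
    (hks : 512 * (k * Fintype.card α) ≤ s ^ 2) :
    ∃ σ : α ≃ β, IsMatchingIn R σ ∧ ∀ a a', a ≠ a' → ¬ C (a, σ a) (a', σ a') := by
  classical
  let _ : MeasurableSpace (α ≃ β) := ⊤
  let μ : Measure (α ≃ β) := Measure.count.restrict {σ | IsMatchingIn R σ}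
  have hμ : μ ≠ 0 :=
    Measure.restrict_eq_zero.not.2 <| Measure.count_ne_zero_iff.2 <|
      hR.exists_isMatchingIn hcard (by linarith)
  have hpos : 0 < μ.real (avoiding containing (conflictPairs C)) := by
    refine (isLopsidependent_containing hR hC (by linarith) hk).measureReal_avoiding_pos
      (d := 8 * (k * Fintype.card α)) hμ (by positivity) ?_ ?_ fun i _ ↦ ?_
    · rw [← div_eq_mul_inv, div_lt_one (by positivity)]
      nlinarith
    · calc 4 * ((s / 4) ^ 2)⁻¹ * (8 * (k * Fintype.card α))
          = 512 * (k * Fintype.card α) / s ^ 2 := by ring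
        _ ≤ 1 := div_le_one_of_le₀ hks (sq_nonneg s)
    · refine (Nat.cast_le.2 (hC.card_sharesVertex_le i)).trans_eq ?_
      rw [← hcard]
      push_cast
      ring
  obtain ⟨σ, hσ, hσR⟩ :
      (avoiding containing (conflictPairs C) ∩ {σ | IsMatchingIn R σ}).Nonempty := by
    rw [measureReal_restrict_apply .of_discrete, measureReal_def] at hpos
    exact nonempty_of_measure_ne_zero (ENNReal.toReal_pos_iff.1 hpos).1.ne'
  exact ⟨σ, hσR, fun a a' hne hconflict ↦
    mem_avoiding.1 hσ ((a, σ a), (a', σ a')) (mem_conflictPairs.2 ⟨hconflict, hne⟩) ⟨rfl, rfl⟩⟩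

lemma HasMinDegree.two_mul_le_card [Nonempty α] (hR : HasMinDegree R (Fintype.card α / 2 + s))
    (hcard : Fintype.card α = Fintype.card β) : 2 * s ≤ Fintype.card α := by
  classical
  obtain ⟨a⟩ := ‹Nonempty α›
  have hdeg : #{b | R a b} ≤ Fintype.card α := hcard ▸ card_le_univ _
  rify at hdeg
  linarith [hR.left a]

theorem exists_isMatchingIn_conflictFree [Std.Symm C]
    (hcard : Fintype.card α = Fintype.card β) (hR : HasMinDegree R (Fintype.card α / 2 + s))
    (hC : ConflictsBounded C k) (hs : 0 ≤ s) (hks : 512 * (k * Fintype.card α) ≤ s ^ 2) :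
    ∃ σ : α ≃ β, IsMatchingIn R σ ∧ ∀ a a', a ≠ a' → ¬ C (a, σ a) (a', σ a') := by
  classical
  obtain ⟨σ, hσ⟩ := hR.exists_isMatchingIn hcard (by linarith)
  obtain hα | hα := isEmpty_or_nonempty α
  · exact ⟨σ, hσ, fun a ↦ hα.elim a⟩
  obtain rfl | hk := k.eq_zero_or_pos
  · refine ⟨σ, hσ, fun a a' _ hconflict ↦ ?_⟩
    have hempty := card_eq_zero.1 (Nat.le_zero.1 (hC (a, σ a)))
    exact filter_eq_empty_iff.1 hempty (mem_univ _) hconflict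
  have hs_large : 1024 * k ≤ s := by
    have hcard_pos : (0 : ℝ) < Fintype.card α := mod_cast Fintype.card_pos
    nlinarith [hR.two_mul_le_card hcard]
  have hk_one : (1 : ℝ) ≤ k := mod_cast hk
  exact exists_isMatchingIn_conflictFree_of_le hcard hR hC (by linarith) (by linarith) hks

end Switching

section Bipartite

variable {V : Type*} {G : SimpleGraph V} {A B : Set V} {F : Set (Sym2 (Sym2 V))} {δ : ℝ} {k : ℕ}

open Classical in
lemma card_filter_adj_eq_ncard_neighborSet [Fintype B] (hG : G.IsBipartiteWith A B) {a : V}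
    (ha : a ∈ A) : #{b : B | G.Adj a b} = (G.neighborSet a).ncard := by
  have hcoe : ((univ.filter fun b : B ↦ G.Adj a b).map (.subtype _) : Set V) = G.neighborSet a := by
    ext b
    simpa using hG.mem_of_mem_adj ha
  rw [← hcoe, Set.ncard_coe_finset, card_map]

lemma hasMinDegree_adj [Fintype A] [Fintype B] (hG : G.IsBipartiteWith A B)
    (hδ : ∀ v, δ ≤ (G.neighborSet v).ncard) : HasMinDegree (fun (a : A) (b : B) ↦ G.Adj a b) δ where
  left a := by
    rw [card_filter_adj_eq_ncard_neighborSet hG a.2]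
    exact hδ a
  right b := by
    classical
    rw [filter_congr fun (a : A) _ ↦ G.adj_comm a b,
      card_filter_adj_eq_ncard_neighborSet hG.symm b.2]
    exact hδ b

/-- The edge of a graph on `V` that joins the endpoints of `e`. -/
def toSym2 (e : A × B) : Sym2 V :=
  s(e.1, e.2)

lemma toSym2_injective (hdisj : Disjoint A B) : Function.Injective (toSym2 : A × B → Sym2 V) := by
  rintro ⟨a, b⟩ ⟨a', b'⟩ h
  obtain ⟨ha, hb⟩ | ⟨ha, -⟩ := Sym2.eq_iff.1 h
  · exact Prod.ext (Subtype.ext ha) (Subtype.ext hb)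
  · exact (Set.disjoint_left.1 hdisj a.2 (ha ▸ b'.2)).elim

/-- The conflicts of `F` between edges of `G`, as a relation on `A × B`. The degree bound on `F`
constrains only the edges of `G`, so other pairs are not related. -/
def InConflict (G : SimpleGraph V) (F : Set (Sym2 (Sym2 V))) (e f : A × B) : Prop :=
  toSym2 e ∈ G.edgeSet ∧ toSym2 f ∈ G.edgeSet ∧ s(toSym2 e, toSym2 f) ∈ F

instance : Std.Symm (InConflict G F : A × B → A × B → Prop) where
  symm _ _ := fun ⟨he, hf, hF⟩ ↦ ⟨hf, he, Sym2.eq_swap ▸ hF⟩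

lemma conflictsBounded_inConflict [Finite V] [Fintype A] [Fintype B] (hdisj : Disjoint A B)
    (hF : ∀ e ∈ G.edgeSet, {f | s(e, f) ∈ F}.ncard ≤ k) :
    ConflictsBounded (InConflict G F : A × B → A × B → Prop) k := by
  classical
  intro e
  by_cases he : toSym2 e ∈ G.edgeSet
  · rw [← Set.ncard_coe_finset]
    refine (Set.ncard_le_ncard_of_injOn toSym2 ?_ (toSym2_injective hdisj).injOn).trans (hF _ he)
    intro f hf
    exact (mem_filter_univ f |>.1 hf).2.2
  · simp [InConflict, he]

open SimpleGraph in
lemma exists_isPerfectMatching_edgeSet_eq (hunion : A ∪ B = Set.univ) (hdisj : Disjoint A B)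
    (σ : A ≃ B) (hσ : ∀ a : A, G.Adj a (σ a)) :
    ∃ M : G.Subgraph, M.IsPerfectMatching ∧ M.edgeSet = Set.range fun a ↦ toSym2 (a, σ a) := by
  have hpairwise : Pairwise fun a a' : A ↦
      Disjoint (G.subgraphOfAdj (hσ a)).support (G.subgraphOfAdj (hσ a')).support := by
    intro a a' hne
    have hσne : σ a' ≠ σ a := σ.injective.ne hne.symm
    simp [support_subgraphOfAdj, hdisj.ne_of_mem, hdisj.symm.ne_of_mem, hne.symm, hσne,
      Subtype.coe_inj]
  refine ⟨⨆ a, G.subgraphOfAdj (hσ a),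
    ⟨Subgraph.IsMatching.iSup (fun a ↦ .subgraphOfAdj (hσ a)) hpairwise, fun v ↦ ?_⟩, ?_⟩
  · rw [Subgraph.verts_iSup, Set.mem_iUnion]
    obtain hv | hv : v ∈ A ∪ B := hunion ▸ Set.mem_univ v
    · exact ⟨⟨v, hv⟩, .inl rfl⟩
    · exact ⟨σ.symm ⟨v, hv⟩, .inr (by simp)⟩
  · ext e
    simp [Subgraph.edgeSet_iSup, toSym2, eq_comm]

theorem conflict_free_PM_general {ε : ℝ} (hε : 0 ≤ ε) {n : ℕ} [Finite V] (hunion : A ∪ B = Set.univ)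
    (hdisj : Disjoint A B) (hA : A.ncard = n) (hB : B.ncard = n)
    (hbip : ∀ u v : V, G.Adj u v → (u ∈ A ∧ v ∈ B) ∨ (u ∈ B ∧ v ∈ A))
    (hδ : ∀ v : V, (1 / 2 + ε) * n ≤ ((G.neighborSet v).ncard : ℝ))
    (hF : ∀ e ∈ G.edgeSet, (({f : Sym2 V | s(e, f) ∈ F}).ncard : ℝ) ≤ ε ^ 2 / 512 * n) :
    ∃ M : G.Subgraph, M.IsPerfectMatching ∧
      ∀ e ∈ M.edgeSet, ∀ f ∈ M.edgeSet, e ≠ f → s(e, f) ∉ F := by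
  have := Fintype.ofFinite A
  have := Fintype.ofFinite B
  rw [← Nat.card_coe_set_eq, Nat.card_eq_fintype_card] at hA hB
  have hR : HasMinDegree (fun (a : A) (b : B) ↦ G.Adj a b) (Fintype.card A / 2 + ε * n) :=
    hasMinDegree_adj ⟨hdisj, hbip⟩ fun v ↦ by rw [hA]; linarith [hδ v]
  have hC : ConflictsBounded (InConflict G F : A × B → A × B → Prop) ⌊ε ^ 2 / 512 * n⌋₊ :=
    conflictsBounded_inConflict hdisj fun e he ↦ Nat.le_floor (hF e he)
  have hfloor : (⌊ε ^ 2 / 512 * n⌋₊ : ℝ) ≤ ε ^ 2 / 512 * n := Nat.floor_le (by positivity)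
  have hbound : 512 * (⌊ε ^ 2 / 512 * n⌋₊ * Fintype.card A) ≤ (ε * n) ^ 2 :=
    calc 512 * ((⌊ε ^ 2 / 512 * n⌋₊ : ℝ) * Fintype.card A)
        ≤ 512 * (ε ^ 2 / 512 * n * n) := by rw [hA]; gcongr
      _ = (ε * n) ^ 2 := by ring
  obtain ⟨σ, hσ, hconflict⟩ :=
    exists_isMatchingIn_conflictFree (hA.trans hB.symm) hR hC (by positivity) hbound
  obtain ⟨M, hM, hedge⟩ := exists_isPerfectMatching_edgeSet_eq hunion hdisj σ hσ
  refine ⟨M, hM, ?_⟩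
  rw [hedge]
  rintro _ ⟨a, rfl⟩ _ ⟨a', rfl⟩ hne hF'
  exact hconflict a a' (fun h ↦ hne (h ▸ rfl)) ⟨hσ a, hσ a', hF'⟩

end Bipartite

/-- For every ε > 0 there exist μ > 0 and n₀ such that for every n ≥ n₀:
if G is a balanced bipartite graph on 2n vertices with minimum degree at least (1/2 + ε)n,
then for every μn-bounded system of conflicts F for E(G) (a set of unordered pairs of
edges of G, each edge lying in at most μn conflicts) there exists a perfect matching of G
that is F-conflict-free. -/
theorem conflict_free_PM :
    ∀ ε : ℝ, 0 < ε →
    ∃ μ : ℝ, 0 < μ ∧ ∃ n₀ : ℕ, ∀ n : ℕ, n₀ ≤ n →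
      ∀ (V : Type) [Fintype V] (G : SimpleGraph V) (A B : Set V),
        A ∪ B = Set.univ → Disjoint A B → A.ncard = n → B.ncard = n →
        (∀ u v : V, G.Adj u v → (u ∈ A ∧ v ∈ B) ∨ (u ∈ B ∧ v ∈ A)) →
        (∀ v : V, (1 / 2 + ε) * n ≤ ((G.neighborSet v).ncard : ℝ)) →
        ∀ F : Set (Sym2 (Sym2 V)),
          (∀ p ∈ F, ∀ e ∈ p, e ∈ G.edgeSet) →
          (∀ e ∈ G.edgeSet, (({f : Sym2 V | s(e, f) ∈ F}).ncard : ℝ) ≤ μ * n) →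
          ∃ M : G.Subgraph, M.IsPerfectMatching ∧
            ∀ e ∈ M.edgeSet, ∀ f ∈ M.edgeSet, e ≠ f → s(e, f) ∉ F :=
  fun ε hε ↦ ⟨ε ^ 2 / 512, by positivity, 0, fun _ _ _ _ _ _ _ hunion hdisj hA hB hbip hδ _ _ hF ↦
    conflict_free_PM_general hε.le hunion hdisj hA hB hbip hδ hF⟩
end
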